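/- arXiv:1910.00173 — 5 statements merged into one kernel-verified Lean document; each statement's English description precedes it below -/
import Mathlib

section
/- There is an absolute constant C such that for every α ∈ (0, 1/1000] the following hold, with f ranging over the four functions Ω̄, η̄, Ω̄ − D_R Ω̄, η̄ − D_R η̄ and g ranging over Ω̄, η̄. (a) For all R > 0 and β ∈ (0,π/2): |D_R^k f| ≤ C f for every 0 ≤ k ≤ 3, and |D_R^i D_β^j f| ≤ C α sin(β) f for all i, j ≥ 0 with i + j ≤ 3 and j ≥ 1. (b) Uniformly in R > 0: ∫_0^{π/2} R² (D_R^k g)² φ₁ dβ ≤ C α² for 0 ≤ k ≤ 3, and ∫_0^{π/2} R² (D_R^i D_β^j g)² φ₂ dβ ≤ C α³ for i + j ≤ 3, j ≥ 1; moreover ⟨(D_R^k (g − D_R g))², φ₁⟩ ≤ C α² for 0 ≤ k ≤ 3 and ⟨(D_R^i D_β^j (g − D_R g))², φ₂⟩ ≤ C α³ for i + j ≤ 3, j ≥ 1. -/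
open Real MeasureTheory Set

noncomputable section

namespace Paper

/-- The domain `(0,∞) × (0,π/2)` in the `(R,β)` variables. -/
def Qdom : Set (ℝ × ℝ) := Set.Ioi (0:ℝ) ×ˢ Set.Ioo (0:ℝ) (Real.pi/2)

/-- Inner product `⟨f,g⟩ = ∫₀^∞ ∫₀^{π/2} f g dβ dR`. -/
def inner2 (f g : ℝ → ℝ → ℝ) : ℝ :=
  ∫ R in Set.Ioi (0:ℝ), ∫ β in Set.Ioo (0:ℝ) (Real.pi/2), f R β * g R β

/-- The `L²` norm `‖f‖₂`. -/
def norm2 (f : ℝ → ℝ → ℝ) : ℝ := Real.sqrt (inner2 f f)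

/-- `‖h‖_{L²(R)}` for functions of `R` alone. -/
def normR (h : ℝ → ℝ) : ℝ := Real.sqrt (∫ R in Set.Ioi (0:ℝ), (h R)^2)

/-- `D_R = R ∂_R`. -/
def DR (f : ℝ → ℝ → ℝ) : ℝ → ℝ → ℝ := fun R β => R * deriv (fun r => f r β) R

/-- `D_R` for functions of `R` alone. -/
def DR1 (h : ℝ → ℝ) : ℝ → ℝ := fun R => R * deriv h R

/-- `D_β = sin(2β) ∂_β`. -/
def Dbeta (f : ℝ → ℝ → ℝ) : ℝ → ℝ → ℝ :=
  fun R β => Real.sin (2*β) * deriv (fun b => f R b) β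

/-- `L₁₂(Ω)(R) = ∫_R^∞ ∫₀^{π/2} Ω(s,β) sin(2β) s⁻¹ dβ ds`. -/
def L12 (Ω : ℝ → ℝ → ℝ) (R : ℝ) : ℝ :=
  ∫ s in Set.Ioi R, ∫ β in Set.Ioo (0:ℝ) (Real.pi/2), Ω s β * Real.sin (2*β) / s

/-- `L̃₁₂(Ω)(R) = L₁₂(Ω)(R) − L₁₂(Ω)(0)`. -/
def tL12 (Ω : ℝ → ℝ → ℝ) (R : ℝ) : ℝ := L12 Ω R - L12 Ω 0

/-- Compact support contained in the open domain `(0,∞)×(0,π/2)`. -/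
def suppIn (f : ℝ → ℝ → ℝ) : Prop :=
  ∃ K : Set (ℝ × ℝ), IsCompact K ∧ K ⊆ Qdom ∧ ∀ x y : ℝ, (x, y) ∉ K → f x y = 0

/-- Integrability over the domain. -/
def Integrable2 (f : ℝ → ℝ → ℝ) : Prop :=
  MeasureTheory.IntegrableOn (Function.uncurry f) Qdom

/-- `Γ(β) = (cos β)^α`. -/
def Γf (α : ℝ) (β : ℝ) : ℝ := Real.cos β ^ α

/-- The normalizing constant `c = (2/π)∫₀^{π/2} Γ(β) sin(2β) dβ`. -/
def cst (α : ℝ) : ℝ :=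
  (2/Real.pi) * ∫ β in Set.Ioo (0:ℝ) (Real.pi/2), Γf α β * Real.sin (2*β)

/-- The approximate profile `Ω̄`. -/
def Ωbar (α : ℝ) : ℝ → ℝ → ℝ := fun R β => (α / cst α) * Γf α β * (3*R/(1+R)^2)

/-- The approximate profile `η̄`. -/
def ηbar (α : ℝ) : ℝ → ℝ → ℝ := fun R β => (α / cst α) * Γf α β * (6*R/(1+R)^3)

/-- The singular weight `φ₁ = (1+R)⁴R⁻⁴ sin(2β)^{-σ}`, `σ = 99/100`. -/
def phi1 : ℝ → ℝ → ℝ := fun R β => (1+R)^4 / R^4 * Real.sin (2*β) ^ (-(99/100 : ℝ))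

/-- The singular weight `φ₂ = (1+R)⁴R⁻⁴ sin(2β)^{-γ}`, `γ = 1 + α/10`. -/
def phi2 (α : ℝ) : ℝ → ℝ → ℝ := fun R β => (1+R)^4 / R^4 * Real.sin (2*β) ^ (-(1 + α/10))

/-- The singular weight `ψ₁ = (1+R)⁴R⁻⁴ (sin β cos β)^{-σ}`. -/
def psi1 : ℝ → ℝ → ℝ := fun R β =>
  (1+R)^4 / R^4 * (Real.sin β * Real.cos β) ^ (-(99/100 : ℝ))

/-- The singular weight `ψ₂ = (1+R)⁴R⁻⁴ (sin β)^{-σ}(cos β)^{-γ}`. -/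
def psi2 (α : ℝ) : ℝ → ℝ → ℝ := fun R β =>
  (1+R)^4 / R^4 * Real.sin β ^ (-(99/100 : ℝ)) * Real.cos β ^ (-(1 + α/10))

/-- `c_ω = −(2/(πα)) L₁₂(Ω)(0)`. -/
def cω (α : ℝ) (Ω : ℝ → ℝ → ℝ) : ℝ := -(2/(Real.pi*α)) * L12 Ω 0

/-- The linearized operator `L₁`. -/
def opL1 (α : ℝ) (Ω η : ℝ → ℝ → ℝ) : ℝ → ℝ → ℝ := fun R β =>
  - DR Ω R β - (3/(1+R)) * Dbeta Ω R β - Ω R β + η R β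
  + cω α Ω * (Ωbar α R β - DR (Ωbar α) R β)

/-- The linearized operator `L₂`. -/
def opL2 (α : ℝ) (Ω η : ℝ → ℝ → ℝ) : ℝ → ℝ → ℝ := fun R β =>
  - DR η R β - (3/(1+R)) * Dbeta η R β + (-2 + 3/(1+R)) * η R β
  + (2/(Real.pi*α)) * tL12 Ω R * ηbar α R β
  + cω α Ω * (ηbar α R β - DR (ηbar α) R β)

/-- `ξ̄` in Cartesian variables. -/
def ξbarC (α : ℝ) (x y : ℝ) : ℝ :=
  -(18*α^2 / cst α) * ∫ z in Set.Ioo (0:ℝ) x,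
      (y/(y^2+z^2)) * (z ^ α * (z^2+y^2) ^ (α/2) / (1 + (z^2+y^2) ^ (α/2))^4)

/-- `ξ̄` in the `(R,β)` variables, via `x = R^{1/α} cos β`, `y = R^{1/α} sin β`. -/
def ξbar (α : ℝ) : ℝ → ℝ → ℝ := fun R β =>
  ξbarC α (R ^ (1/α) * Real.cos β) (R ^ (1/α) * Real.sin β)

/-- The linearized operator `L₃`. -/
def opL3 (α : ℝ) (Ω ξ : ℝ → ℝ → ℝ) : ℝ → ℝ → ℝ := fun R β =>
  - DR ξ R β - (3/(1+R)) * Dbeta ξ R β + (-2 - 3/(1+R)) * ξ R β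
  - (2/(Real.pi*α)) * tL12 Ω R * ξbar α R β
  + cω α Ω * (3 * ξbar α R β - DR (ξbar α) R β)

/-- Weighted Sobolev norm `H^m` with radial weight `w1` and angular weight `w2`:
`‖f‖ = Σ_{0≤k≤m} ‖(D_R^k f)√w1‖₂ + Σ_{i+j≤m−1} ‖(D_R^i D_β^{j+1} f)√w2‖₂`. -/
def Hnorm (m : ℕ) (w1 w2 : ℝ → ℝ → ℝ) (f : ℝ → ℝ → ℝ) : ℝ :=
  (∑ k ∈ Finset.range (m+1),
    norm2 (fun R β => DR^[k] f R β * Real.sqrt (w1 R β)))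
  + ∑ p ∈ (Finset.range (m+1) ×ˢ Finset.range (m+1)).filter
      (fun p => p.1 + p.2 + 1 ≤ m),
      norm2 (fun R β => DR^[p.1] (Dbeta^[p.2+1] f) R β * Real.sqrt (w2 R β))

/-- Sup of `|f|` over the domain `(0,∞)×(0,π/2)`. -/
def supDom (f : ℝ → ℝ → ℝ) : ℝ :=
  ⨆ (R : Set.Ioi (0:ℝ)) (β : Set.Ioo (0:ℝ) (Real.pi/2)), |f R.1 β.1|

/-- The weighted `C¹` norm. -/
def C1norm (α : ℝ) (f : ℝ → ℝ → ℝ) : ℝ :=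
  supDom f + supDom (fun R β => (1+R)/R * DR f R β)
  + supDom (fun R β =>
      (1 + (R * Real.sin (2*β) ^ α) ^ (-(1/40 : ℝ))) * Dbeta f R β)

/-- Boundedness of `f` on the domain. -/
def BddDom (f : ℝ → ℝ → ℝ) : Prop :=
  ∃ M : ℝ, ∀ R ∈ Set.Ioi (0:ℝ), ∀ β ∈ Set.Ioo (0:ℝ) (Real.pi/2), |f R β| ≤ M

/-- Finiteness of the weighted `C¹` norm. -/
def C1Fin (α : ℝ) (f : ℝ → ℝ → ℝ) : Prop :=
  BddDom f ∧ BddDom (fun R β => (1+R)/R * DR f R β) ∧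
  BddDom (fun R β => (1 + (R * Real.sin (2*β) ^ α) ^ (-(1/40 : ℝ))) * Dbeta f R β)

/-- The weighted `W^{l,∞}` norm. -/
def Wnorm (α : ℝ) (l : ℕ) (f : ℝ → ℝ → ℝ) : ℝ :=
  (∑ k ∈ Finset.range (l+1), supDom (DR^[k] f))
  + ∑ p ∈ (Finset.range (l+1) ×ˢ Finset.range (l+1)).filter
      (fun p => p.1 + p.2 ≤ l ∧ 1 ≤ p.2),
      supDom (fun R β => Real.sin (2*β) ^ (-(α/5)) *
        DR^[p.1] (fun R' β' => Dbeta^[p.2] f R' β' / (α/10 + Real.sin (2*β'))) R β)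

/-- Finiteness of the `W^{l,∞}` norm. -/
def WFin (α : ℝ) (l : ℕ) (f : ℝ → ℝ → ℝ) : Prop :=
  (∀ k ≤ l, BddDom (DR^[k] f)) ∧
  ∀ k j : ℕ, k + j ≤ l → 1 ≤ j →
    BddDom (fun R β => Real.sin (2*β) ^ (-(α/5)) *
      DR^[k] (fun R' β' => Dbeta^[j] f R' β' / (α/10 + Real.sin (2*β'))) R β)

/-- `I(f)(x,y) = ∫₀ˣ f(z,y)/z dz`. -/
def Ifun (f : ℝ → ℝ → ℝ) : ℝ → ℝ → ℝ := fun x y => ∫ z in Set.Ioo (0:ℝ) x, f z y / z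

/-- `D_S g = (1/α)(z ∂_z g + y ∂_y g)` in Cartesian variables. -/
def DScart (α : ℝ) (g : ℝ → ℝ → ℝ) : ℝ → ℝ → ℝ := fun a b =>
  (1/α) * (a * deriv (fun a' => g a' b) a + b * deriv (fun b' => g a b') b)

/-- `D_τ g = 2y ∂_y g − 2α (y²/(y²+z²)) D_S g` in Cartesian variables. -/
def DTcart (α : ℝ) (g : ℝ → ℝ → ℝ) : ℝ → ℝ → ℝ := fun a b =>
  2*b * deriv (fun b' => g a b') b - 2*α*(b^2/(b^2+a^2)) * DScart α g a b

/-! ### Helper material for the proof -/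

/-- `D_β` for functions of `β` alone. -/
def DB1 (G : ℝ → ℝ) : ℝ → ℝ := fun β => Real.sin (2*β) * deriv G β

/-- Separated functions. -/
def Ten (A : ℝ) (G h : ℝ → ℝ) : ℝ → ℝ → ℝ := fun R β => A * G β * h R

lemma DR_Ten (A : ℝ) (G h : ℝ → ℝ) : DR (Ten A G h) = Ten A G (DR1 h) := by
  funext R β
  simp only [DR, Ten, DR1, deriv_const_mul_field]
  ring

lemma Dbeta_Ten (A : ℝ) (G h : ℝ → ℝ) : Dbeta (Ten A G h) = Ten A (DB1 G) h := by
  funext R β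
  have : (fun b => A * G b * h R) = fun b => (A * h R) * G b := by funext b; ring
  simp only [Dbeta, Ten, DB1]
  rw [this, deriv_const_mul_field]
  ring

lemma DR_iter_Ten (A : ℝ) (G : ℝ → ℝ) (i : ℕ) (h : ℝ → ℝ) :
    DR^[i] (Ten A G h) = Ten A G (DR1^[i] h) := by
  induction i generalizing h with
  | zero => rfl
  | succ n ih => rw [Function.iterate_succ_apply, DR_Ten, ih, Function.iterate_succ_apply]

lemma Dbeta_iter_Ten (A : ℝ) (h : ℝ → ℝ) (j : ℕ) (G : ℝ → ℝ) :
    Dbeta^[j] (Ten A G h) = Ten A (DB1^[j] G) h := by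
  induction j generalizing G with
  | zero => rfl
  | succ n ih => rw [Function.iterate_succ_apply, Dbeta_Ten, ih, Function.iterate_succ_apply]

lemma sub_DR_Ten (A : ℝ) (G h : ℝ → ℝ) :
    (fun R β => Ten A G h R β - DR (Ten A G h) R β) = Ten A G (fun R => h R - DR1 h R) := by
  rw [DR_Ten]
  funext R β
  simp only [Ten]
  ring

/-! #### Radial derivatives -/

lemma DR1_step {a b : ℝ} {h g Q Q' : ℝ → ℝ}
    (hh : ∀ R > (0:ℝ), HasDerivAt h (h R * (a - b * (R/(1+R))) / R) R)
    (hQ : ∀ u, HasDerivAt Q (Q' u) u)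
    (hg : ∀ R > (0:ℝ), g R = h R * Q (R/(1+R))) :
    ∀ R > (0:ℝ), DR1 g R = h R * ((a - b * (R/(1+R))) * Q (R/(1+R))
      + (R/(1+R)) * (1 - R/(1+R)) * Q' (R/(1+R))) := by
  intro R hR
  have h1 : (1 + R) ≠ 0 := by positivity
  have hu : HasDerivAt (fun r : ℝ => r/(1+r)) (1/(1+R)^2) R := by
    have := (hasDerivAt_id R).div ((hasDerivAt_id R).const_add 1) h1
    refine this.congr_deriv ?_
    simp only [id]
    field_simp
    ring
  have hd := (hh R hR).mul ((hQ (R/(1+R))).comp R hu)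
  have he : g =ᶠ[nhds R] (h * (Q ∘ fun r : ℝ => r/(1+r))) := by
    filter_upwards [lt_mem_nhds hR] with r hr
    exact hg r hr
  simp only [DR1]
  rw [(hd.congr_of_eventuallyEq he).deriv]
  simp only [Function.comp]
  field_simp
  ring

lemma u_mem {R : ℝ} (hR : 0 < R) : 0 ≤ R/(1+R) ∧ R/(1+R) ≤ 1 := by
  constructor
  · positivity
  · rw [div_le_one (by positivity)]; linarith

lemma DR1_bound {a b : ℝ} {h : ℝ → ℝ} (ha : 0 ≤ a) (hab : a ≤ b) (hb : b ≤ 4)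
    (hh : ∀ R > (0:ℝ), HasDerivAt h (h R * (a - b * (R/(1+R))) / R) R)
    (hpos : ∀ R > (0:ℝ), 0 ≤ h R) :
    ∀ k ≤ 3, ∀ R > (0:ℝ), |DR1^[k] h R| ≤ 200 * h R := by
  have e0 : ∀ R > (0:ℝ), h R = h R * (fun _ => (1:ℝ)) (R/(1+R)) := fun R _ => by simp
  have e1 := DR1_step (Q' := fun _ => 0) hh (fun u => hasDerivAt_const u (1:ℝ)) e0
  have e1' : ∀ R > (0:ℝ), DR1 h R = h R * (fun u => a - b*u) (R/(1+R)) := fun R hR => by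
    rw [e1 R hR]; ring
  have e2 := DR1_step (Q' := fun _ => -b) hh
    (fun u => by simpa using ((hasDerivAt_id u).const_mul b).const_sub a) e1'
  have e2' : ∀ R > (0:ℝ), DR1 (DR1 h) R
      = h R * (fun u => (a - b*u)^2 - b*(u*(1-u))) (R/(1+R)) := fun R hR => by
    rw [e2 R hR]; ring
  have e3 := DR1_step (Q := fun u => (a - b*u)^2 - b*(u*(1-u))) (Q' := fun u => -2*b*(a-b*u) - b*(1-2*u)) hh
    (fun u => by
      have h1 : HasDerivAt (fun u => a - b*u) (-b) u := by
        simpa using ((hasDerivAt_id u).const_mul b).const_sub a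
      have h2 := (h1.pow 2).sub
        (((hasDerivAt_id u).mul ((hasDerivAt_id u).const_sub 1)).const_mul b)
      refine h2.congr_deriv ?_
      simp
      ring) e2'
  have key : ∀ (x : ℝ) (q : ℝ), 0 ≤ x → |q| ≤ 200 → |x*q| ≤ 200 * x := by
    intro x q hx hq
    rw [abs_mul, abs_of_nonneg hx]
    nlinarith
  intro k hk R hR
  obtain ⟨u0, u1⟩ := u_mem hR
  have hq1 : |a - b*(R/(1+R))| ≤ 4 := by
    rw [abs_le]; constructor <;> nlinarith
  have hw0 : 0 ≤ (R/(1+R))*(1-R/(1+R)) := mul_nonneg u0 (by linarith)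
  have hw1 : (R/(1+R))*(1-R/(1+R)) ≤ 1 := by nlinarith
  have hq2 : |(a - b*(R/(1+R)))^2 - b*((R/(1+R))*(1-R/(1+R)))| ≤ 20 := by
    have := abs_le.1 hq1
    rw [abs_le]; constructor <;> nlinarith
  interval_cases k
  · simp only [Function.iterate_zero, id]
    rw [abs_of_nonneg (hpos R hR)]
    linarith [hpos R hR]
  · simp only [Function.iterate_succ, Function.iterate_zero, Function.comp, id]
    rw [e1' R hR]
    exact key _ _ (hpos R hR) (by simp only; linarith)
  · simp only [Function.iterate_succ, Function.iterate_zero, Function.comp, id]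
    rw [e2' R hR]
    exact key _ _ (hpos R hR) (by simp only; linarith)
  · simp only [Function.iterate_succ, Function.iterate_zero, Function.comp, id]
    rw [e3 R hR]
    refine key _ _ (hpos R hR) ?_
    refine (abs_add_le _ _).trans ?_
    rw [abs_mul, abs_mul, abs_of_nonneg hw0]
    have hb0 : 0 ≤ b := ha.trans hab
    have h3 : |-2*b*(a-b*(R/(1+R))) - b*(1-2*(R/(1+R)))| ≤ 40 := by
      refine (abs_sub _ _).trans ?_
      rw [abs_mul, abs_mul, abs_mul, abs_of_nonneg hb0]
      have h4 : |1-2*(R/(1+R))| ≤ 1 := by rw [abs_le]; constructor <;> linarith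
      have h5 : b * |a - b*(R/(1+R))| ≤ 4*4 := mul_le_mul hb hq1 (abs_nonneg _) (by norm_num)
      have h6 : b * |1-2*(R/(1+R))| ≤ 4*1 := mul_le_mul hb h4 (abs_nonneg _) (by norm_num)
      have : |(-2:ℝ)| = 2 := by norm_num
      rw [this]
      nlinarith
    have h7 := mul_le_mul hq1 hq2 (abs_nonneg _) (by norm_num)
    have h8 := mul_le_mul hw1 h3 (abs_nonneg _) (by norm_num)
    linarith

lemma hasDerivAt_prof (c : ℝ) (m n : ℕ) (R : ℝ) (hR : 0 < R) :
    HasDerivAt (fun R : ℝ => c * R^(m+1)/(1+R)^(n+1))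
      ((c * R^(m+1)/(1+R)^(n+1)) * ((m+1:ℕ) - (n+1:ℕ) * (R/(1+R))) / R) R := by
  have h1 : (1 + R) ≠ 0 := by positivity
  have hd := (((hasDerivAt_id R).pow (m+1)).const_mul c).div
    (((hasDerivAt_id R).const_add 1).pow (n+1)) (pow_ne_zero _ h1)
  refine hd.congr_deriv ?_
  simp only [id, Pi.pow_apply, Nat.add_sub_cancel]
  field_simp
  push_cast
  ring

/-! #### Angular derivatives -/

lemma trig_pos {β : ℝ} (hβ : β ∈ Set.Ioo (0:ℝ) (Real.pi/2)) :
    0 < Real.sin β ∧ 0 < Real.cos β :=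
  ⟨Real.sin_pos_of_pos_of_lt_pi hβ.1 (by linarith [hβ.2, Real.pi_pos]),
   Real.cos_pos_of_mem_Ioo ⟨by linarith [hβ.1, Real.pi_pos], hβ.2⟩⟩

lemma DB1_step {α : ℝ} {g Q Q' : ℝ → ℝ}
    (hQ : ∀ u, HasDerivAt Q (Q' u) u)
    (hg : ∀ β ∈ Set.Ioo (0:ℝ) (Real.pi/2), g β = Γf α β * Q (Real.sin β ^ 2)) :
    ∀ β ∈ Set.Ioo (0:ℝ) (Real.pi/2), DB1 g β = Γf α β * (-2*α*(Real.sin β ^ 2) * Q (Real.sin β ^ 2)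
      + 4 * (Real.sin β ^ 2) * (1 - Real.sin β ^ 2) * Q' (Real.sin β ^ 2)) := by
  intro β hβ
  obtain ⟨hs, hc⟩ := trig_pos hβ
  have hu : HasDerivAt (fun b : ℝ => Real.sin b ^ 2) (2 * Real.sin β * Real.cos β) β := by
    refine ((Real.hasDerivAt_sin β).pow 2).congr_deriv ?_
    simp
  have hG : HasDerivAt (Γf α) (-Real.sin β * α * Real.cos β ^ (α-1)) β :=
    (Real.hasDerivAt_cos β).rpow_const (Or.inl hc.ne')
  have hd := hG.mul ((hQ (Real.sin β ^ 2)).comp β hu)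
  have he : g =ᶠ[nhds β] (Γf α * (Q ∘ fun b : ℝ => Real.sin b ^ 2)) := by
    filter_upwards [Ioo_mem_nhds hβ.1 hβ.2] with r hr
    exact hg r hr
  simp only [DB1]
  rw [(hd.congr_of_eventuallyEq he).deriv, Real.sin_two_mul, Real.rpow_sub_one hc.ne']
  simp only [Function.comp, Γf]
  rw [← Real.cos_sq']
  field_simp
  ring

lemma DB1_bound {α : ℝ} (h0 : 0 < α) (h1 : α ≤ 1) :
    ∀ j, 1 ≤ j → j ≤ 3 → ∀ β ∈ Set.Ioo (0:ℝ) (Real.pi/2),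
      |DB1^[j] (Γf α) β| ≤ 100 * α * Real.sin β ^ 2 * Γf α β := by
  have e0 : ∀ β ∈ Set.Ioo (0:ℝ) (Real.pi/2),
    Γf α β = Γf α β * (fun _ => (1:ℝ)) (Real.sin β ^ 2) := fun R _ => by simp
  have e1 := DB1_step (Q' := fun _ => 0) (fun u => hasDerivAt_const u (1:ℝ)) e0
  have e1' : ∀ β ∈ Set.Ioo (0:ℝ) (Real.pi/2),
      DB1 (Γf α) β = Γf α β * (fun u => -2*α*u) (Real.sin β ^ 2) := fun R hR => by
    rw [e1 R hR]; ring
  have e2 := DB1_step (Q := fun u => -2*α*u) (Q' := fun _ => -2*α)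
    (fun u => ((hasDerivAt_id u).const_mul (-2*α)).congr_deriv (by simp)) e1'
  have e2' : ∀ β ∈ Set.Ioo (0:ℝ) (Real.pi/2), DB1 (DB1 (Γf α)) β
      = Γf α β * (fun u => 4*α^2*u^2 - 8*α*(u*(1-u))) (Real.sin β ^ 2) := fun R hR => by
    rw [e2 R hR]; ring
  have e3 := DB1_step (Q := fun u => 4*α^2*u^2 - 8*α*(u*(1-u))) (Q' := fun u => 8*α^2*u - 8*α*(1-2*u))
    (fun u => by
      have h2 := (((hasDerivAt_id u).pow 2).const_mul (4*α^2)).sub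
        (((hasDerivAt_id u).mul ((hasDerivAt_id u).const_sub 1)).const_mul (8*α))
      refine h2.congr_deriv ?_
      simp
      ring) e2'
  intro j hj hj3 β hβ
  obtain ⟨hs, hc⟩ := trig_pos hβ
  have hG : 0 ≤ Γf α β := Real.rpow_nonneg hc.le _
  have key : ∀ q r : ℝ, q = α * Real.sin β ^ 2 * r → |r| ≤ 100 →
      |Γf α β * q| ≤ 100 * α * Real.sin β ^ 2 * Γf α β := by
    intro q r hq hr
    have hx : 0 ≤ Γf α β * (α * Real.sin β ^ 2) := by positivity
    rw [hq, ← mul_assoc, abs_mul, abs_of_nonneg hx]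
    nlinarith
  generalize hu : Real.sin β ^ 2 = u at *
  have u0 : 0 ≤ u := hu ▸ sq_nonneg _
  have u1 : u ≤ 1 := hu ▸ Real.sin_sq_le_one β
  have hw0 : 0 ≤ u*(1-u) := mul_nonneg u0 (by linarith)
  have hw1 : u*(1-u) ≤ 1 := by nlinarith
  have p0 : 0 ≤ α * u := by positivity
  have p1 : α * u ≤ 1 := by nlinarith
  interval_cases j
  · simp only [Function.iterate_succ, Function.iterate_zero, Function.comp, id]
    rw [e1' β hβ, hu]
    exact key _ (-2) (by ring) (by norm_num)
  · simp only [Function.iterate_succ, Function.iterate_zero, Function.comp, id]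
    rw [e2' β hβ, hu]
    exact key _ (4*(α*u) - 8*(1-u)) (by ring) (by rw [abs_le]; constructor <;> linarith)
  · simp only [Function.iterate_succ, Function.iterate_zero, Function.comp, id]
    rw [e3 β hβ, hu]
    refine key _ (-2*(4*(α*u)*(α*u) - 8*(α*u)*(1-u)) + 4*(1-u)*(8*(α*u) - 8*(1-2*u)))
      (by ring) ?_
    have q1 : 0 ≤ (α*u)*(α*u) := by positivity
    have q2 : (α*u)*(α*u) ≤ 1 := by nlinarith
    have q3 : 0 ≤ (α*u)*(1-u) := mul_nonneg p0 (by linarith)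
    have q4 : (α*u)*(1-u) ≤ 1 := by nlinarith
    rw [abs_le]; constructor <;> nlinarith

/-! #### Integrals -/

lemma int_cos {p : ℝ} (hp : 0 < p) :
    IntegrableOn (fun β => Real.sin β * Real.cos β ^ (p-1)) (Set.Ioo (0:ℝ) (Real.pi/2)) ∧
    ∫ β in Set.Ioo (0:ℝ) (Real.pi/2), Real.sin β * Real.cos β ^ (p-1) = 1/p := by
  have hpi : (0:ℝ) ≤ Real.pi/2 := by positivity
  have hcont : ContinuousOn (fun β => -(1/p) * Real.cos β ^ p) (Set.Icc (0:ℝ) (Real.pi/2)) :=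
    (continuous_const.mul (Real.continuous_cos.rpow_const (fun _ => Or.inr hp.le))).continuousOn
  have hd : ∀ x ∈ Set.Ioo (0:ℝ) (Real.pi/2), HasDerivAt (fun β => -(1/p) * Real.cos β ^ p)
      (Real.sin x * Real.cos x ^ (p-1)) x := by
    intro x hx
    refine (((Real.hasDerivAt_cos x).rpow_const (p := p)
      (Or.inl (trig_pos hx).2.ne')).const_mul (-(1/p))).congr_deriv ?_
    field_simp
  have hi := intervalIntegral.integrableOn_deriv_of_nonneg hcont hd
    (fun x hx => mul_nonneg (trig_pos hx).1.le (Real.rpow_nonneg (trig_pos hx).2.le _))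
  refine ⟨hi.mono_set Set.Ioo_subset_Ioc_self, ?_⟩
  rw [← integral_Ioc_eq_integral_Ioo, ← intervalIntegral.integral_of_le hpi,
    intervalIntegral.integral_eq_sub_of_hasDerivAt_of_le hpi hcont hd
      ((intervalIntegrable_iff_integrableOn_Ioc_of_le hpi).2 hi)]
  simp [Real.zero_rpow hp.ne']

lemma int_sin {p : ℝ} (hp : 0 < p) :
    IntegrableOn (fun β => Real.cos β * Real.sin β ^ (p-1)) (Set.Ioo (0:ℝ) (Real.pi/2)) ∧
    ∫ β in Set.Ioo (0:ℝ) (Real.pi/2), Real.cos β * Real.sin β ^ (p-1) = 1/p := by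
  have hpi : (0:ℝ) ≤ Real.pi/2 := by positivity
  have hcont : ContinuousOn (fun β => (1/p) * Real.sin β ^ p) (Set.Icc (0:ℝ) (Real.pi/2)) :=
    (continuous_const.mul (Real.continuous_sin.rpow_const (fun _ => Or.inr hp.le))).continuousOn
  have hd : ∀ x ∈ Set.Ioo (0:ℝ) (Real.pi/2), HasDerivAt (fun β => (1/p) * Real.sin β ^ p)
      (Real.cos x * Real.sin x ^ (p-1)) x := by
    intro x hx
    refine (((Real.hasDerivAt_sin x).rpow_const (p := p)
      (Or.inl (trig_pos hx).1.ne')).const_mul ((1/p))).congr_deriv ?_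
    field_simp
  have hi := intervalIntegral.integrableOn_deriv_of_nonneg hcont hd
    (fun x hx => mul_nonneg (trig_pos hx).2.le (Real.rpow_nonneg (trig_pos hx).1.le _))
  refine ⟨hi.mono_set Set.Ioo_subset_Ioc_self, ?_⟩
  rw [← integral_Ioc_eq_integral_Ioo, ← intervalIntegral.integral_of_le hpi,
    intervalIntegral.integral_eq_sub_of_hasDerivAt_of_le hpi hcont hd
      ((intervalIntegrable_iff_integrableOn_Ioc_of_le hpi).2 hi)]
  simp [Real.zero_rpow hp.ne']

lemma cst_eq {α : ℝ} (h0 : 0 < α) : cst α = 4/(Real.pi*(2+α)) := by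
  have : ∫ β in Set.Ioo (0:ℝ) (Real.pi/2), Γf α β * Real.sin (2*β) = 2 * (1/(α+2)) := by
    rw [← (int_cos (p := α+2) (by linarith)).2, ← integral_const_mul]
    refine setIntegral_congr_fun measurableSet_Ioo (fun β hβ => ?_)
    obtain ⟨hs, hc⟩ := trig_pos hβ
    simp only [Γf]
    rw [Real.sin_two_mul, show α + 2 - 1 = α + 1 by ring, Real.rpow_add_one hc.ne']
    ring
  rw [cst, this]
  have := Real.pi_pos
  field_simp
  ring

lemma amp_bound {α : ℝ} (h0 : 0 < α) (h1 : α ≤ 1/1000) :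
    0 ≤ α / cst α ∧ α / cst α ≤ 2 * α := by
  rw [cst_eq h0]
  have hp := Real.pi_pos
  have hp4 := Real.pi_lt_d2
  constructor
  · positivity
  · rw [div_div_eq_mul_div, div_le_iff₀ (by norm_num)]
    have : Real.pi * (2+α) ≤ 8 := by nlinarith
    nlinarith

lemma ang1 {α : ℝ} (h0 : 0 < α) :
    ∫ β in Set.Ioo (0:ℝ) (Real.pi/2), (Γf α β)^2 * Real.sin (2*β) ^ (-(99/100 : ℝ)) ≤ 200 := by
  obtain ⟨i1, e1⟩ := int_cos (p := 1/100) (by norm_num)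
  obtain ⟨i2, e2⟩ := int_sin (p := 1/100) (by norm_num)
  have : (200:ℝ) = ∫ β in Set.Ioo (0:ℝ) (Real.pi/2), (Real.sin β * Real.cos β ^ ((1/100:ℝ)-1)
      + Real.cos β * Real.sin β ^ ((1/100:ℝ)-1)) := by
    rw [integral_add i1 i2, e1, e2]; norm_num
  rw [this]
  refine integral_mono_of_nonneg ?_ (i1.add i2) ?_
  · filter_upwards [ae_restrict_mem measurableSet_Ioo] with β hβ
    obtain ⟨hs, hc⟩ := trig_pos hβ
    have : 0 ≤ Real.sin (2*β) := by rw [Real.sin_two_mul]; positivity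
    simp only [Pi.zero_apply]
    positivity
  · filter_upwards [ae_restrict_mem measurableSet_Ioo] with β hβ
    obtain ⟨hs, hc⟩ := trig_pos hβ
    have hG0 : 0 ≤ Γf α β := Real.rpow_nonneg hc.le _
    have hG : Γf α β ≤ 1 := Real.rpow_le_one hc.le (Real.cos_le_one _) h0.le
    have hG2 : (Γf α β)^2 ≤ 1 := pow_le_one₀ hG0 hG
    rw [show (1/100:ℝ)-1 = -(99/100) by norm_num, Real.sin_two_mul,
      Real.mul_rpow (by positivity) hc.le, Real.mul_rpow (by norm_num) hs.le]
    have h2 : (2:ℝ) ^ (-(99/100:ℝ)) ≤ 1 :=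
      Real.rpow_le_one_of_one_le_of_nonpos (by norm_num) (by norm_num)
    have h20 : (0:ℝ) ≤ (2:ℝ) ^ (-(99/100:ℝ)) := by positivity
    have hS1 : Real.sin β * Real.sin β ^ (-(99/100:ℝ)) ≤ 1 := by
      rw [← Real.rpow_one_add' hs.le (by norm_num)]
      exact Real.rpow_le_one hs.le (Real.sin_le_one _) (by norm_num)
    have hC1 : Real.cos β * Real.cos β ^ (-(99/100:ℝ)) ≤ 1 := by
      rw [← Real.rpow_one_add' hc.le (by norm_num)]
      exact Real.rpow_le_one hc.le (Real.cos_le_one _) (by norm_num)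
    have hS0 : 0 ≤ Real.sin β ^ (-(99/100:ℝ)) := by positivity
    have hC0 : 0 ≤ Real.cos β ^ (-(99/100:ℝ)) := by positivity
    generalize Real.sin β ^ (-(99/100:ℝ)) = S at *
    generalize Real.cos β ^ (-(99/100:ℝ)) = K at *
    generalize (2:ℝ) ^ (-(99/100:ℝ)) = T at *
    have hsc := Real.sin_sq_add_cos_sq β
    have hSK : 0 ≤ S * K := by positivity
    have a1 : (Γf α β)^2 * T ≤ 1 := mul_le_one₀ hG2 h20 h2
    calc (Γf α β)^2 * (T * S * K) = ((Γf α β)^2 * T) * (S * K) := by ring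
      _ ≤ 1 * (S*K) := by gcongr
      _ = (Real.sin β * S) * (Real.sin β * K) + (Real.cos β * K) * (Real.cos β * S) := by
          linear_combination (-S*K)*hsc
      _ ≤ 1 * (Real.sin β * K) + 1 * (Real.cos β * S) := by gcongr
      _ = _ := by ring

lemma ang2 {α : ℝ} (h0 : 0 < α) (h1 : α ≤ 1/1000) (j : ℕ) (hj : 1 ≤ j) (hj3 : j ≤ 3) :
    ∫ β in Set.Ioo (0:ℝ) (Real.pi/2), (DB1^[j] (Γf α) β)^2 * Real.sin (2*β) ^ (-(1 + α/10))
      ≤ 10000 * α := by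
  obtain ⟨i1, e1⟩ := int_cos (p := 19/10*α) (by linarith)
  have h2 : 10000 * α^2 * (1/(19/10*α)) ≤ 10000 * α := by
    rw [mul_one_div, div_le_iff₀ (by linarith)]
    nlinarith [sq_nonneg α]
  refine le_trans ?_ h2
  rw [← e1, ← integral_const_mul]
  refine integral_mono_of_nonneg ?_ (i1.const_mul _) ?_
  · filter_upwards [ae_restrict_mem measurableSet_Ioo] with β hβ
    obtain ⟨hs, hc⟩ := trig_pos hβ
    have : 0 ≤ Real.sin (2*β) := by rw [Real.sin_two_mul]; positivity
    simp only [Pi.zero_apply]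
    positivity
  · filter_upwards [ae_restrict_mem measurableSet_Ioo] with β hβ
    obtain ⟨hs, hc⟩ := trig_pos hβ
    have hb := DB1_bound h0 (by linarith) j hj hj3 β hβ
    have hG0 : 0 ≤ Γf α β := Real.rpow_nonneg hc.le _
    have hb2 : (DB1^[j] (Γf α) β)^2 ≤ (100 * α * Real.sin β ^ 2 * Γf α β)^2 := by
      rw [← sq_abs]; gcongr
    have hw0 : 0 ≤ Real.sin (2*β) ^ (-(1 + α/10)) := by
      apply Real.rpow_nonneg; rw [Real.sin_two_mul]; positivity
    have hw : Real.sin (2*β) ^ (-(1 + α/10))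
        ≤ Real.sin β ^ (-(1 + α/10)) * Real.cos β ^ (-(1 + α/10)) := by
      rw [Real.sin_two_mul, Real.mul_rpow (by positivity) hc.le, Real.mul_rpow (by norm_num) hs.le]
      have h2 : (2:ℝ) ^ (-(1 + α/10)) ≤ 1 :=
        Real.rpow_le_one_of_one_le_of_nonpos (by norm_num) (by linarith)
      have : 0 ≤ Real.sin β ^ (-(1 + α/10)) * Real.cos β ^ (-(1 + α/10)) := by positivity
      nlinarith
    have hC : (Γf α β)^2 * Real.cos β ^ (-(1 + α/10)) = Real.cos β ^ (19/10*α - 1) := by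
      rw [Γf, ← Real.rpow_natCast, ← Real.rpow_mul hc.le, ← Real.rpow_add hc]
      congr 1; push_cast; ring
    have hS : (Real.sin β)^4 * Real.sin β ^ (-(1 + α/10)) ≤ Real.sin β := by
      rw [← Real.rpow_natCast, ← Real.rpow_add hs]
      conv_rhs => rw [← Real.rpow_one (Real.sin β)]
      refine Real.rpow_le_rpow_of_exponent_ge hs (Real.sin_le_one _) ?_
      push_cast; linarith
    have hC0 : 0 ≤ Real.cos β ^ (19/10*α - 1) := by positivity
    calc (DB1^[j] (Γf α) β)^2 * Real.sin (2*β) ^ (-(1 + α/10))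
        ≤ (100 * α * Real.sin β ^ 2 * Γf α β)^2 *
          (Real.sin β ^ (-(1 + α/10)) * Real.cos β ^ (-(1 + α/10))) :=
          mul_le_mul hb2 hw hw0 (by positivity)
      _ = 10000 * α^2 * (((Real.sin β)^4 * Real.sin β ^ (-(1 + α/10))) *
          ((Γf α β)^2 * Real.cos β ^ (-(1 + α/10)))) := by ring
      _ ≤ 10000 * α^2 * (Real.sin β * Real.cos β ^ (19/10*α - 1)) := by
          rw [hC]; gcongr

lemma int_rad : IntegrableOn (fun R : ℝ => 1/(1+R)^2) (Set.Ioi (0:ℝ)) ∧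
    ∫ R in Set.Ioi (0:ℝ), 1/(1+R)^2 = 1 := by
  have hd : ∀ x ∈ Set.Ici (0:ℝ), HasDerivAt (fun R : ℝ => -(1+R)⁻¹) (1/(1+x)^2) x := by
    intro x hx
    have hx' : (1 + x) ≠ 0 := by have : (0:ℝ) ≤ x := hx; positivity
    refine (((hasDerivAt_id x).const_add 1).inv hx').neg.congr_deriv ?_
    simp [neg_div]
  have hl : Filter.Tendsto (fun R : ℝ => -(1+R)⁻¹) Filter.atTop (nhds 0) := by
    have := (tendsto_inv_atTop_zero.comp
      (Filter.tendsto_atTop_add_const_left Filter.atTop (1:ℝ) Filter.tendsto_id)).neg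
    simpa using this
  refine ⟨integrableOn_Ioi_deriv_of_nonneg' hd (fun x hx => by positivity) hl, ?_⟩
  rw [integral_Ioi_of_hasDerivAt_of_nonneg' hd (fun x hx => by positivity) hl]
  norm_num

/-! #### Assembly -/

/-- Pointwise bounds for a separated profile. -/
lemma pointwise {α : ℝ} (h0 : 0 < α) (h1 : α ≤ 1/1000) {h : ℝ → ℝ}
    (hb : ∀ k ≤ 3, ∀ R > (0:ℝ), |DR1^[k] h R| ≤ 200 * h R)
    (hpos : ∀ R > (0:ℝ), 0 ≤ h R) {C : ℝ} (hC : 20000 ≤ C) :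
    (∀ k ≤ 3, ∀ R > (0:ℝ), ∀ β ∈ Set.Ioo (0:ℝ) (Real.pi/2),
      |DR^[k] (Ten (α / cst α) (Γf α) h) R β| ≤ C * Ten (α / cst α) (Γf α) h R β) ∧
    (∀ i j : ℕ, 1 ≤ j → i + j ≤ 3 →
      ∀ R > (0:ℝ), ∀ β ∈ Set.Ioo (0:ℝ) (Real.pi/2),
        |DR^[i] (Dbeta^[j] (Ten (α / cst α) (Γf α) h)) R β|
          ≤ C * α * Real.sin β * Ten (α / cst α) (Γf α) h R β) := by
  obtain ⟨A0, A1⟩ := amp_bound h0 h1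
  generalize α / cst α = A at *
  refine ⟨fun k hk R hR β hβ => ?_, fun i j hj hij R hR β hβ => ?_⟩
  · obtain ⟨hs, hc⟩ := trig_pos hβ
    have hG : 0 ≤ Γf α β := Real.rpow_nonneg hc.le _
    have hh := hpos R hR
    rw [DR_iter_Ten]
    simp only [Ten]
    rw [abs_mul, abs_of_nonneg (mul_nonneg A0 hG)]
    calc A * Γf α β * |DR1^[k] h R| ≤ A * Γf α β * (200 * h R) := by
          gcongr; exact hb k hk R hR
      _ = 200 * (A * Γf α β * h R) := by ring
      _ ≤ C * (A * Γf α β * h R) := by gcongr; linarith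
  · obtain ⟨hs, hc⟩ := trig_pos hβ
    have hG : 0 ≤ Γf α β := Real.rpow_nonneg hc.le _
    have hh := hpos R hR
    rw [Dbeta_iter_Ten, DR_iter_Ten]
    simp only [Ten]
    rw [abs_mul, abs_mul, abs_of_nonneg A0]
    have hs2 : Real.sin β ^ 2 ≤ Real.sin β := by nlinarith [Real.sin_le_one β]
    calc A * |DB1^[j] (Γf α) β| * |DR1^[i] h R|
        ≤ A * (100 * α * Real.sin β ^ 2 * Γf α β) * (200 * h R) := by
          gcongr
          · exact DB1_bound h0 (by linarith) j hj (by omega) β hβ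
          · exact hb i (by omega) R hR
      _ ≤ A * (100 * α * Real.sin β * Γf α β) * (200 * h R) := by gcongr
      _ = 20000 * α * Real.sin β * (A * Γf α β * h R) := by ring
      _ ≤ C * α * Real.sin β * (A * Γf α β * h R) := by gcongr

/-- Common form of the inner integral. -/
lemma inner_int (A x W : ℝ) (G w : ℝ → ℝ) {M : ℝ} (hM : ∫ β in Set.Ioo (0:ℝ) (Real.pi/2),
      (G β)^2 * w β ≤ M) {N α : ℝ} (hA : 0 ≤ A) (hA2 : A ≤ 2*α) (hx : x^2 * W ≤ N) (hW : 0 ≤ W)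
      (hM0 : 0 ≤ M) :
    ∫ β in Set.Ioo (0:ℝ) (Real.pi/2), (A * G β * x)^2 * (W * w β) ≤ 4*α^2*N*M := by
  have : ∫ β in Set.Ioo (0:ℝ) (Real.pi/2), (A * G β * x)^2 * (W * w β)
      = (A^2 * (x^2 * W)) * ∫ β in Set.Ioo (0:ℝ) (Real.pi/2), (G β)^2 * w β := by
    rw [← integral_const_mul]
    congr 1
    funext β
    ring
  rw [this]
  have hx0 : 0 ≤ x^2 * W := by positivity
  have hA3 : A^2 ≤ 4*α^2 := by nlinarith
  calc _ ≤ (A^2 * (x^2 * W)) * M := by gcongr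
    _ ≤ (4*α^2*N) * M := by gcongr

lemma b_first {α : ℝ} (h0 : 0 < α) (h1 : α ≤ 1/1000) {h : ℝ → ℝ}
    (hb : ∀ k ≤ 3, ∀ R > (0:ℝ), |DR1^[k] h R| ≤ 200 * h R)
    (hle : ∀ R > (0:ℝ), h R ≤ 6*R/(1+R)^2) {C : ℝ} (hC : 10^12 ≤ C) :
    (∀ k ≤ 3, ∀ R > (0:ℝ),
      (∫ β in Set.Ioo (0:ℝ) (Real.pi/2),
        R^2 * (DR^[k] (Ten (α / cst α) (Γf α) h) R β)^2 * phi1 R β) ≤ C * α^2) ∧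
    (∀ i j : ℕ, 1 ≤ j → i + j ≤ 3 → ∀ R > (0:ℝ),
      (∫ β in Set.Ioo (0:ℝ) (Real.pi/2),
        R^2 * (DR^[i] (Dbeta^[j] (Ten (α / cst α) (Γf α) h)) R β)^2 * phi2 α R β)
        ≤ C * α^3) := by
  obtain ⟨A0, A1⟩ := amp_bound h0 h1
  generalize α / cst α = A at *
  have hN : ∀ k ≤ 3, ∀ R > (0:ℝ), (R * DR1^[k] h R)^2 * ((1+R)^4/R^4) ≤ 1440000 := by
    intro k hk R hR
    have hR' : 0 < R := hR
    have q : |R * DR1^[k] h R| ≤ R * (200 * (6*R/(1+R)^2)) := by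
      rw [abs_mul, abs_of_pos hR']
      gcongr
      exact (hb k hk R hR).trans (by linarith [hle R hR])
    rw [← sq_abs]
    calc _ ≤ (R * (200 * (6*R/(1+R)^2)))^2 * ((1+R)^4/R^4) := by gcongr
      _ = 1440000 := by field_simp; norm_num
  refine ⟨fun k hk R hR => ?_, fun i j hj hij R hR => ?_⟩
  · have hR' : 0 < R := hR
    rw [DR_iter_Ten]
    have := inner_int A (R * DR1^[k] h R) ((1+R)^4/R^4) (Γf α)
      (fun β => Real.sin (2*β) ^ (-(99/100 : ℝ))) (ang1 h0) A0 A1 (hN k hk R hR)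
      (by positivity) (by norm_num)
    refine le_trans (le_of_eq ?_) (this.trans ?_)
    · congr 1; funext β; simp only [Ten, phi1]; ring
    · nlinarith [sq_nonneg α]
  · have hR' : 0 < R := hR
    rw [Dbeta_iter_Ten, DR_iter_Ten]
    have := inner_int A (R * DR1^[i] h R) ((1+R)^4/R^4) (DB1^[j] (Γf α))
      (fun β => Real.sin (2*β) ^ (-(1 + α/10))) (ang2 h0 h1 j hj (by omega)) A0 A1
      (hN i (by omega) R hR) (by positivity) (by positivity)
    refine le_trans (le_of_eq ?_) (this.trans ?_)
    · congr 1; funext β; simp only [Ten, phi2]; ring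
    · have : 0 ≤ α^3 := by positivity
      nlinarith

lemma outer_int {F : ℝ → ℝ} {N : ℝ} (hF0 : ∀ R > (0:ℝ), 0 ≤ F R)
    (hF : ∀ R > (0:ℝ), F R ≤ N * (1/(1+R)^2)) : ∫ R in Set.Ioi (0:ℝ), F R ≤ N := by
  have : N = ∫ R in Set.Ioi (0:ℝ), N * (1/(1+R)^2) := by
    rw [integral_const_mul, int_rad.2, mul_one]
  rw [this]
  refine integral_mono_of_nonneg ?_ (int_rad.1.const_mul N) ?_
  · filter_upwards [ae_restrict_mem measurableSet_Ioi] with R hR using hF0 R hR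
  · filter_upwards [ae_restrict_mem measurableSet_Ioi] with R hR using hF R hR

lemma sin2_nonneg {β : ℝ} (hβ : β ∈ Set.Ioo (0:ℝ) (Real.pi/2)) : 0 ≤ Real.sin (2*β) := by
  obtain ⟨hs, hc⟩ := trig_pos hβ
  rw [Real.sin_two_mul]; positivity

lemma b_second {α : ℝ} (h0 : 0 < α) (h1 : α ≤ 1/1000) {h : ℝ → ℝ}
    (hb : ∀ k ≤ 3, ∀ R > (0:ℝ), |DR1^[k] h R| ≤ 200 * h R)
    (hle : ∀ R > (0:ℝ), h R ≤ 18*R^2/(1+R)^3) {C : ℝ} (hC : 10^12 ≤ C) :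
    (∀ k ≤ 3,
      inner2 (fun R β => (DR^[k] (Ten (α / cst α) (Γf α) h) R β)^2) phi1 ≤ C * α^2) ∧
    (∀ i j : ℕ, 1 ≤ j → i + j ≤ 3 →
      inner2 (fun R β => (DR^[i] (Dbeta^[j] (Ten (α / cst α) (Γf α) h)) R β)^2) (phi2 α)
        ≤ C * α^3) := by
  obtain ⟨A0, A1⟩ := amp_bound h0 h1
  generalize α / cst α = A at *
  have hN : ∀ k ≤ 3, ∀ R > (0:ℝ),
      (DR1^[k] h R)^2 * ((1+R)^4/R^4) ≤ 12960000 * (1/(1+R)^2) := by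
    intro k hk R hR
    have hR' : 0 < R := hR
    have q : |DR1^[k] h R| ≤ 200 * (18*R^2/(1+R)^3) :=
      (hb k hk R hR).trans (by linarith [hle R hR])
    rw [← sq_abs]
    calc _ ≤ (200 * (18*R^2/(1+R)^3))^2 * ((1+R)^4/R^4) := by gcongr
      _ = _ := by field_simp; norm_num
  refine ⟨fun k hk => ?_, fun i j hj hij => ?_⟩
  · rw [DR_iter_Ten]
    have h2 : 4*α^2*12960000*200 ≤ C * α^2 := by nlinarith [sq_nonneg α]
    refine le_trans (outer_int (fun R hR => ?_) (fun R hR => ?_)) h2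
    · have hR' : 0 < R := hR
      refine setIntegral_nonneg measurableSet_Ioo (fun β hβ => ?_)
      have := sin2_nonneg hβ
      simp only [phi1]
      positivity
    · have hR' : 0 < R := hR
      have := inner_int A (DR1^[k] h R) ((1+R)^4/R^4) (Γf α)
        (fun β => Real.sin (2*β) ^ (-(99/100 : ℝ))) (ang1 h0) A0 A1 (hN k hk R hR)
        (by positivity) (by norm_num)
      refine le_trans (le_of_eq ?_) (this.trans (le_of_eq ?_))
      · rfl
      · ring
  · rw [Dbeta_iter_Ten, DR_iter_Ten]
    have h2 : 4*α^2*12960000*(10000*α) ≤ C * α^3 := by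
      have : 0 ≤ α^3 := by positivity
      nlinarith
    refine le_trans (outer_int (fun R hR => ?_) (fun R hR => ?_)) h2
    · have hR' : 0 < R := hR
      refine setIntegral_nonneg measurableSet_Ioo (fun β hβ => ?_)
      have := sin2_nonneg hβ
      simp only [phi2]
      positivity
    · have hR' : 0 < R := hR
      have := inner_int A (DR1^[i] h R) ((1+R)^4/R^4) (DB1^[j] (Γf α))
        (fun β => Real.sin (2*β) ^ (-(1 + α/10))) (ang2 h0 h1 j hj (by omega)) A0 A1
        (hN i (by omega) R hR) (by positivity) (by positivity)
      refine le_trans (le_of_eq ?_) (this.trans (le_of_eq ?_))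
      · rfl
      · ring

lemma DR1_congr_iter {h g : ℝ → ℝ} (hg : ∀ R > (0:ℝ), h R = g R) (k : ℕ) :
    ∀ R > (0:ℝ), DR1^[k] h R = DR1^[k] g R := by
  induction k with
  | zero => exact hg
  | succ n ih =>
    intro R hR
    rw [Function.iterate_succ_apply', Function.iterate_succ_apply']
    simp only [DR1]
    have he : DR1^[n] h =ᶠ[nhds R] DR1^[n] g := by
      filter_upwards [lt_mem_nhds hR] with r hr
      exact ih r hr
    rw [he.deriv_eq]

/-- The bounds for `h` equal on `R > 0` to `c R^a (1+R)^{-b}`. -/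
lemma prof_bound {h : ℝ → ℝ} (c : ℝ) (hc : 0 ≤ c) (m n : ℕ) (hmn : m ≤ n) (hn : n ≤ 3)
    (hh : ∀ R > (0:ℝ), h R = c * R^(m+1)/(1+R)^(n+1)) :
    (∀ k ≤ 3, ∀ R > (0:ℝ), |DR1^[k] h R| ≤ 200 * h R) ∧ ∀ R > (0:ℝ), 0 ≤ h R := by
  have hp : ∀ R > (0:ℝ), 0 ≤ c * R^(m+1)/(1+R)^(n+1) := fun R hR => by
    have : 0 < R := hR
    positivity
  refine ⟨fun k hk R hR => ?_, fun R hR => by rw [hh R hR]; exact hp R hR⟩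
  rw [DR1_congr_iter hh k R hR, hh R hR]
  refine DR1_bound (a := (m+1:ℕ)) (b := (n+1:ℕ)) (by positivity) (by exact_mod_cast (by omega))
    (by exact_mod_cast (by omega)) (fun R hR => hasDerivAt_prof c m n R hR) hp k hk R hR

lemma DR1_prof (c : ℝ) (m n : ℕ) {h : ℝ → ℝ}
    (hh : ∀ R > (0:ℝ), h R = c * R^(m+1)/(1+R)^(n+1)) (R : ℝ) (hR : 0 < R) :
    DR1 h R = (c * R^(m+1)/(1+R)^(n+1)) * ((m+1:ℕ) - (n+1:ℕ) * (R/(1+R))) := by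
  have := DR1_congr_iter hh 1 R hR
  simp only [Function.iterate_one] at this
  rw [this, DR1, (hasDerivAt_prof c m n R hR).deriv]
  field_simp

/-- pointwise and weighted integral estimates for the approximate
profiles `Ω̄, η̄` and the profiles `Ω̄ − D_R Ω̄, η̄ − D_R η̄`. -/
theorem profile_estimates :
    ∃ C : ℝ, ∀ α : ℝ, 0 < α → α ≤ 1/1000 →
      (∀ f ∈ ({Ωbar α, ηbar α,
          fun R β => Ωbar α R β - DR (Ωbar α) R β,
          fun R β => ηbar α R β - DR (ηbar α) R β} : Set (ℝ → ℝ → ℝ)),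
        (∀ k ≤ 3, ∀ R > (0:ℝ), ∀ β ∈ Set.Ioo (0:ℝ) (Real.pi/2),
          |DR^[k] f R β| ≤ C * f R β) ∧
        (∀ i j : ℕ, 1 ≤ j → i + j ≤ 3 →
          ∀ R > (0:ℝ), ∀ β ∈ Set.Ioo (0:ℝ) (Real.pi/2),
            |DR^[i] (Dbeta^[j] f) R β| ≤ C * α * Real.sin β * f R β)) ∧
      (∀ g ∈ ({Ωbar α, ηbar α} : Set (ℝ → ℝ → ℝ)),
        (∀ k ≤ 3, ∀ R > (0:ℝ),
          (∫ β in Set.Ioo (0:ℝ) (Real.pi/2), R^2 * (DR^[k] g R β)^2 * phi1 R β)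
            ≤ C * α^2) ∧
        (∀ i j : ℕ, 1 ≤ j → i + j ≤ 3 → ∀ R > (0:ℝ),
          (∫ β in Set.Ioo (0:ℝ) (Real.pi/2), R^2 * (DR^[i] (Dbeta^[j] g) R β)^2 * phi2 α R β)
            ≤ C * α^3) ∧
        (∀ k ≤ 3,
          inner2 (fun R β => (DR^[k] (fun R' β' => g R' β' - DR g R' β') R β)^2) phi1
            ≤ C * α^2) ∧
        (∀ i j : ℕ, 1 ≤ j → i + j ≤ 3 →
          inner2 (fun R β =>
              (DR^[i] (Dbeta^[j] (fun R' β' => g R' β' - DR g R' β')) R β)^2) (phi2 α)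
            ≤ C * α^3)) := by
  refine ⟨10^12, fun α h0 h1 => ?_⟩
  have a1 : ∀ R > (0:ℝ), (fun R : ℝ => 3*R/(1+R)^2) R = 3 * R^(0+1)/(1+R)^(1+1) :=
    fun R _ => by simp
  have a2 : ∀ R > (0:ℝ), (fun R : ℝ => 6*R/(1+R)^3) R = 6 * R^(0+1)/(1+R)^(2+1) :=
    fun R _ => by simp
  have a3 : ∀ R > (0:ℝ), (fun R => (fun R : ℝ => 3*R/(1+R)^2) R
      - DR1 (fun R : ℝ => 3*R/(1+R)^2) R) R = 6 * R^(1+1)/(1+R)^(2+1) := fun R hR => by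
    have hR' : 0 < R := hR
    simp only
    rw [DR1_prof 3 0 1 a1 R hR]
    field_simp
    push_cast
    ring
  have a4 : ∀ R > (0:ℝ), (fun R => (fun R : ℝ => 6*R/(1+R)^3) R
      - DR1 (fun R : ℝ => 6*R/(1+R)^3) R) R = 18 * R^(1+1)/(1+R)^(3+1) := fun R hR => by
    have hR' : 0 < R := hR
    simp only
    rw [DR1_prof 6 0 2 a2 R hR]
    field_simp
    push_cast
    ring
  obtain ⟨b1, p1⟩ := prof_bound 3 (by norm_num) 0 1 (by norm_num) (by norm_num) a1
  obtain ⟨b2, p2⟩ := prof_bound 6 (by norm_num) 0 2 (by norm_num) (by norm_num) a2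
  obtain ⟨b3, p3⟩ := prof_bound 6 (by norm_num) 1 2 (by norm_num) (by norm_num) a3
  obtain ⟨b4, p4⟩ := prof_bound 18 (by norm_num) 1 3 (by norm_num) (by norm_num) a4
  have hΩ : Ωbar α = Ten (α / cst α) (Γf α) (fun R : ℝ => 3*R/(1+R)^2) := rfl
  have hη : ηbar α = Ten (α / cst α) (Γf α) (fun R : ℝ => 6*R/(1+R)^3) := rfl
  have l1 : ∀ R > (0:ℝ), (fun R : ℝ => 3*R/(1+R)^2) R ≤ 6*R/(1+R)^2 := fun R hR => by
    have hR' : 0 < R := hR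
    simp only
    gcongr
    norm_num
  have l2 : ∀ R > (0:ℝ), (fun R : ℝ => 6*R/(1+R)^3) R ≤ 6*R/(1+R)^2 := fun R hR => by
    have hR' : 0 < R := hR
    simp only
    gcongr
    · linarith
    · norm_num
  have l3 : ∀ R > (0:ℝ), (fun R => (fun R : ℝ => 3*R/(1+R)^2) R
      - DR1 (fun R : ℝ => 3*R/(1+R)^2) R) R ≤ 18*R^2/(1+R)^3 := fun R hR => by
    have hR' : 0 < R := hR
    rw [a3 R hR]
    norm_num only
    gcongr
    norm_num
  have l4 : ∀ R > (0:ℝ), (fun R => (fun R : ℝ => 6*R/(1+R)^3) R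
      - DR1 (fun R : ℝ => 6*R/(1+R)^3) R) R ≤ 18*R^2/(1+R)^3 := fun R hR => by
    have hR' : 0 < R := hR
    rw [a4 R hR]
    norm_num only
    gcongr
    · linarith
    · norm_num
  constructor
  · intro f hf
    simp only [Set.mem_insert_iff, Set.mem_singleton_iff] at hf
    rcases hf with rfl | rfl | rfl | rfl
    · rw [hΩ]; exact pointwise h0 h1 b1 p1 (by norm_num)
    · rw [hη]; exact pointwise h0 h1 b2 p2 (by norm_num)
    · rw [hΩ, sub_DR_Ten]; exact pointwise h0 h1 b3 p3 (by norm_num)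
    · rw [hη, sub_DR_Ten]; exact pointwise h0 h1 b4 p4 (by norm_num)
  · intro g hg
    simp only [Set.mem_insert_iff, Set.mem_singleton_iff] at hg
    rcases hg with rfl | rfl
    · rw [hΩ, sub_DR_Ten]
      obtain ⟨c1, c2⟩ := b_first h0 h1 b1 l1 le_rfl
      obtain ⟨c3, c4⟩ := b_second h0 h1 b3 l3 le_rfl
      exact ⟨c1, c2, c3, c4⟩
    · rw [hη, sub_DR_Ten]
      obtain ⟨c1, c2⟩ := b_first h0 h1 b2 l2 le_rfl
      obtain ⟨c3, c4⟩ := b_second h0 h1 b4 l4 le_rfl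
      exact ⟨c1, c2, c3, c4⟩

end Paper
end
end

section
/- There is an absolute constant C such that for every α ∈ (0, 1/1000] and all x, y > 0 the function ξ̄ satisfies ξ̄(x,y) ≤ 0 and |ξ̄(x,y)| ≤ C α² · ((x²+y²)^{α/2} / (1 + (x²+y²)^{α/2})) · (y^α / (1 + y^α)³) · min(1, x^{1+α}/y^{1+α}). Consequently, writing R = (x²+y²)^{α/2} and β = arctan(y/x), one has |ξ̄| ≤ C (α² R² /(1+R)) · ( 1_{β<π/4} · sin^α(β)/(1 + R sin^α(β))³ + 1_{β≥π/4} · cos^{α+1}(β)/(1+R)³ ). -/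
open Real MeasureTheory Set

noncomputable section

namespace Paper

/-- Lower bound for the normalizing constant. -/
lemma cst_lower (α : ℝ) (h0 : 0 < α) (h1 : α ≤ 1/1000) : 1/3 ≤ cst α := by
  have hpi := Real.pi_pos
  have hint : ∫ β in (0:ℝ)..(Real.pi/2), Real.cos β * Real.sin (2*β) = 2/3 := by
    have hd : ∀ b ∈ Set.uIcc (0:ℝ) (Real.pi/2),
        HasDerivAt (fun b => -(2/3) * Real.cos b ^ 3) (Real.cos b * Real.sin (2*b)) b := by
      intro b _
      have := ((Real.hasDerivAt_cos b).pow 3).const_mul (-(2/3) : ℝ)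
      have e : Real.cos b * Real.sin (2*b) =
          -(2/3) * (((3:ℕ):ℝ) * Real.cos b ^ (3-1) * -Real.sin b) := by
        rw [Real.sin_two_mul]; push_cast; ring
      rw [e]
      exact this
    rw [intervalIntegral.integral_eq_sub_of_hasDerivAt hd]
    · simp
    · exact Continuous.intervalIntegrable (by fun_prop) _ _
  have hle : (2/3 : ℝ) ≤ ∫ β in (0:ℝ)..(Real.pi/2), Γf α β * Real.sin (2*β) := by
    rw [← hint]
    apply intervalIntegral.integral_mono_on (by positivity)
    · exact Continuous.intervalIntegrable (by fun_prop) _ _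
    · apply Continuous.intervalIntegrable
      unfold Γf
      exact (Real.continuous_cos.rpow_const (fun _ => Or.inr h0.le)).mul (by fun_prop)
    · intro b hb
      have hc : 0 ≤ Real.cos b := Real.cos_nonneg_of_mem_Icc ⟨by linarith [hb.1], hb.2⟩
      have hs : 0 ≤ Real.sin (2*b) :=
        Real.sin_nonneg_of_nonneg_of_le_pi (by linarith [hb.1]) (by linarith [hb.2])
      apply mul_le_mul_of_nonneg_right _ hs
      unfold Γf
      exact Real.self_le_rpow_of_le_one hc (Real.cos_le_one b) (by linarith)
  unfold cst
  rw [← integral_Ioc_eq_integral_Ioo, ← intervalIntegral.integral_of_le (by positivity)]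
  have h4 := Real.pi_le_four
  calc (1/3:ℝ) ≤ (2/Real.pi) * (2/3) := by
        rw [div_mul_eq_mul_div, le_div_iff₀ hpi]; linarith
    _ ≤ _ := by gcongr

/-- The reduced integrand after pulling out the radial factors. -/
def hred (α y z : ℝ) : ℝ := (z/y)^α * (y/(y^2+z^2))

lemma hred_cont (α y : ℝ) (h0 : 0 < α) (hy : 0 < y) : Continuous (hred α y) := by
  unfold hred
  apply Continuous.mul
  · exact (continuous_id.div_const y).rpow_const (fun _ => Or.inr h0.le)
  · apply Continuous.div (by fun_prop) (by fun_prop)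
    intro z; positivity

lemma hred_small (α x y : ℝ) (h0 : 0 < α) (hx : 0 < x) (hy : 0 < y) :
    ∫ z in (0:ℝ)..x, hred α y z ≤ x^(1+α)/y^(1+α) := by
  have hb : ∫ z in (0:ℝ)..x, hred α y z ≤ ∫ z in (0:ℝ)..x, z^α * (y^(1+α))⁻¹ := by
    apply intervalIntegral.integral_mono_on hx.le
    · exact (hred_cont α y h0 hy).intervalIntegrable _ _
    · apply Continuous.intervalIntegrable
      exact (continuous_id.rpow_const (fun _ => Or.inr h0.le)).mul continuous_const
    · intro z hz
      unfold hred
      rw [Real.div_rpow hz.1 hy.le, Real.rpow_add hy, Real.rpow_one, mul_inv, div_eq_mul_inv,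
        mul_assoc, mul_comm (y⁻¹)]
      apply mul_le_mul_of_nonneg_left _ (Real.rpow_nonneg hz.1 _)
      apply mul_le_mul_of_nonneg_left _ (by positivity)
      rw [div_le_iff₀ (by positivity)]
      have : y⁻¹ * (y^2+z^2) = y + y⁻¹ * z^2 := by field_simp
      rw [this]
      have : 0 ≤ y⁻¹ * z^2 := by positivity
      linarith
  refine hb.trans ?_
  rw [intervalIntegral.integral_mul_const, integral_rpow (Or.inl (by linarith)),
    Real.zero_rpow (by linarith), sub_zero, ← div_eq_mul_inv, add_comm α 1]
  apply div_le_div_of_nonneg_right _ (by positivity)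
  exact div_le_self (by positivity) (by linarith)

lemma hred_le3 (α x y : ℝ) (h0 : 0 < α) (h1 : α ≤ 1/1000) (hx : 0 < x) (hy : 0 < y) :
    ∫ z in (0:ℝ)..x, hred α y z ≤ 3 := by
  rcases le_total x y with hxy | hxy
  · refine (hred_small α x y h0 hx hy).trans ?_
    have : x^(1+α)/y^(1+α) ≤ 1 := by
      rw [div_le_one (by positivity)]
      exact Real.rpow_le_rpow hx.le hxy (by linarith)
    linarith
  · have hii : ∀ a b, IntervalIntegrable (hred α y) volume a b :=
      fun a b => (hred_cont α y h0 hy).intervalIntegrable _ _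
    rw [← intervalIntegral.integral_add_adjacent_intervals (hii 0 y) (hii y x)]
    have h1' := hred_small α y y h0 hy hy
    rw [div_self (by positivity)] at h1'
    have hnot : (0:ℝ) ∉ Set.uIcc y x := by
      rw [Set.uIcc_of_le hxy]; intro h; linarith [h.1]
    have h2 : ∫ z in y..x, hred α y z ≤ ∫ z in y..x, z^(α-2) * (y/y^α) := by
      apply intervalIntegral.integral_mono_on hxy (hii _ _)
      · exact (intervalIntegral.intervalIntegrable_rpow (Or.inr hnot)).mul_const _
      · intro z hz
        have hz0 : 0 < z := lt_of_lt_of_le hy hz.1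
        unfold hred
        rw [Real.div_rpow hz0.le hy.le, Real.rpow_sub hz0, Real.rpow_two]
        have : z^α / y^α * (y/(y^2+z^2)) = (z^α * (y / y^α)) / (y^2+z^2) := by field_simp
        rw [this, div_mul_eq_mul_div]
        apply div_le_div_of_nonneg_left (by positivity) (by positivity)
        nlinarith
    have h3 : ∫ z in y..x, z^(α-2) * (y/y^α) ≤ 2 := by
      rw [intervalIntegral.integral_mul_const,
        integral_rpow (Or.inr ⟨by linarith, hnot⟩)]
      have e : α - 2 + 1 = α - 1 := by ring
      rw [e]
      have hxp : 0 ≤ x^(α-1) := by positivity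
      have hyp : 0 < y^(α-1) := by positivity
      have hey : y^(α-1) * (y/y^α) = 1 := by
        rw [Real.rpow_sub hy, Real.rpow_one]; field_simp
      have h4 : (x^(α-1) - y^(α-1))/(α-1) ≤ 2 * y^(α-1) := by
        rw [div_le_iff_of_neg (by linarith)]
        nlinarith
      calc _ ≤ 2 * y^(α-1) * (y/y^α) := by gcongr
        _ = 2 := by rw [mul_assoc, hey]; norm_num
    linarith

/-- Bound for the integral. -/
lemma int_bound (α x y : ℝ) (h0 : 0 < α) (h1 : α ≤ 1/1000) (hx : 0 < x) (hy : 0 < y) :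
    0 ≤ (∫ z in Set.Ioo (0:ℝ) x,
      (y/(y^2+z^2)) * (z ^ α * (z^2+y^2) ^ (α/2) / (1 + (z^2+y^2) ^ (α/2))^4)) ∧
    (∫ z in Set.Ioo (0:ℝ) x,
      (y/(y^2+z^2)) * (z ^ α * (z^2+y^2) ^ (α/2) / (1 + (z^2+y^2) ^ (α/2))^4)) ≤
      ((x^2+y^2) ^ (α/2) / (1 + (x^2+y^2) ^ (α/2)))
          * (y ^ α / (1 + y ^ α)^3) * (3 * min 1 (x ^ (1+α) / y ^ (1+α))) := by
  rw [← integral_Ioc_eq_integral_Ioo, ← intervalIntegral.integral_of_le hx.le]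
  constructor
  · apply intervalIntegral.integral_nonneg hx.le
    intro z hz
    have := hz.1
    positivity
  have hmin : ∫ z in (0:ℝ)..x, hred α y z ≤ 3 * min 1 (x ^ (1+α) / y ^ (1+α)) := by
    rcases le_total 1 (x ^ (1+α) / y ^ (1+α)) with h | h
    · rw [min_eq_left h]; linarith [hred_le3 α x y h0 h1 hx hy]
    · rw [min_eq_right h]
      have : 0 ≤ x ^ (1+α) / y ^ (1+α) := by positivity
      linarith [hred_small α x y h0 hx hy]
  have hS : Continuous (fun z : ℝ => (z^2+y^2)^(α/2)) :=
    Continuous.rpow_const (by fun_prop) (fun _ => Or.inr (by linarith))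
  have hSp : ∀ z : ℝ, 0 < (z^2+y^2)^(α/2) := fun z => by positivity
  have hmono : ∫ z in (0:ℝ)..x,
      (y/(y^2+z^2)) * (z ^ α * (z^2+y^2) ^ (α/2) / (1 + (z^2+y^2) ^ (α/2))^4) ≤
      ∫ z in (0:ℝ)..x, ((x^2+y^2) ^ (α/2) / (1 + (x^2+y^2) ^ (α/2)))
          * (y ^ α / (1 + y ^ α)^3) * hred α y z := by
    apply intervalIntegral.integral_mono_on hx.le
    · apply Continuous.intervalIntegrable
      apply Continuous.mul
      · exact Continuous.div (by fun_prop) (by fun_prop) (fun z => by positivity)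
      · apply Continuous.div
        · exact (continuous_id.rpow_const (fun _ => Or.inr h0.le)).mul hS
        · fun_prop
        · intro z
          have := hSp z
          positivity
    · exact (continuous_const.mul (hred_cont α y h0 hy)).intervalIntegrable _ _
    · intro z hz
      have hz0 := hz.1
      unfold hred
      rw [Real.div_rpow hz0 hy.le]
      have hS0 := hSp z
      have hSx : (z^2+y^2)^(α/2) ≤ (x^2+y^2)^(α/2) := by
        apply Real.rpow_le_rpow (by positivity) _ (by linarith)
        have := hz.2
        gcongr
      have hyS : y^α ≤ (z^2+y^2)^(α/2) := by
        have : y^α = (y^2)^(α/2) := by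
          rw [← Real.rpow_natCast, ← Real.rpow_mul hy.le]; congr 1; push_cast; ring
        rw [this]
        apply Real.rpow_le_rpow (by positivity) _ (by linarith)
        nlinarith [sq_nonneg z]
      set S := (z^2+y^2)^(α/2)
      set R := (x^2+y^2)^(α/2)
      have hY : 0 < y^α := by positivity
      set Y := y^α
      have hZ : 0 ≤ z^α := by positivity
      have e1 : (y/(y^2+z^2)) * (z ^ α * S / (1 + S)^4) =
        (S/(1+S)) * (1/(1+S)^3) * (z^α * (y/(y^2+z^2))) := by field_simp
      have e2 : R/(1+R) * (Y/(1+Y)^3) * (z^α/Y * (y/(y^2+z^2))) =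
        R/(1+R) * (1/(1+Y)^3) * (z^α * (y/(y^2+z^2))) := by field_simp
      rw [e1, e2]
      have e3 : S/(1+S) ≤ R/(1+R) := by
        rw [div_le_div_iff₀ (by positivity) (by linarith)]; nlinarith
      have hR : 0 < R := by linarith
      gcongr
  refine hmono.trans ?_
  rw [intervalIntegral.integral_const_mul]
  gcongr

lemma second_est (α x y : ℝ) (h0 : 0 < α) (h1 : α ≤ 1/1000) (hx : 0 < x) (hy : 0 < y) :
    ξbarC α x y ≤ 0 ∧
      |ξbarC α x y| ≤ 162 * α^2 * ((x^2+y^2) ^ (α/2) / (1 + (x^2+y^2) ^ (α/2)))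
          * (y ^ α / (1 + y ^ α)^3) * min 1 (x ^ (1+α) / y ^ (1+α)) := by
  obtain ⟨hi0, hi1⟩ := int_bound α x y h0 h1 hx hy
  have hc := cst_lower α h0 h1
  have hc0 : 0 < cst α := by linarith
  unfold ξbarC
  set I := ∫ z in Set.Ioo (0:ℝ) x,
      (y/(y^2+z^2)) * (z ^ α * (z^2+y^2) ^ (α/2) / (1 + (z^2+y^2) ^ (α/2))^4)
  have hk : 18*α^2 / cst α ≤ 54 * α^2 := by
    rw [div_le_iff₀ hc0]; nlinarith [sq_nonneg α]
  have hk0 : 0 ≤ 18*α^2 / cst α := by positivity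
  have hneg : -(18*α^2 / cst α) * I ≤ 0 := by nlinarith [mul_nonneg hk0 hi0]
  refine ⟨hneg, ?_⟩
  rw [abs_of_nonpos hneg]
  calc -(-(18*α^2 / cst α) * I) = (18*α^2 / cst α) * I := by ring
    _ ≤ (54*α^2) * _ := mul_le_mul hk hi1 hi0 (by positivity)
    _ = _ := by ring

/-- sign and pointwise decay estimates for `ξ̄`. -/
theorem xibar_pointwise_estimates :
    ∃ C : ℝ, ∀ α : ℝ, 0 < α → α ≤ 1/1000 → ∀ x y : ℝ, 0 < x → 0 < y →
      ξbarC α x y ≤ 0 ∧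
      |ξbarC α x y| ≤ C * α^2 * ((x^2+y^2) ^ (α/2) / (1 + (x^2+y^2) ^ (α/2)))
          * (y ^ α / (1 + y ^ α)^3) * min 1 (x ^ (1+α) / y ^ (1+α)) ∧
      (let R : ℝ := (x^2+y^2) ^ (α/2)
       let β : ℝ := Real.arctan (y/x)
       |ξbarC α x y| ≤ C * (α^2 * R^2 / (1+R)) *
          ((if β < Real.pi/4 then Real.sin β ^ α / (1 + R * Real.sin β ^ α)^3 else 0)
            + (if Real.pi/4 ≤ β then Real.cos β ^ (α+1) / (1+R)^3 else 0))) := by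
  refine ⟨2592, fun α h0 h1 x y hx hy => ?_⟩
  obtain ⟨hs, hb⟩ := second_est α x y h0 h1 hx hy
  refine ⟨hs, hb.trans ?_, ?_⟩
  · gcongr
    norm_num
  intro R β
  have hr2 : 0 < x^2+y^2 := by positivity
  set r := Real.sqrt (x^2+y^2) with hr
  have hr0 : 0 < r := Real.sqrt_pos.mpr hr2
  have hrsq : r^2 = x^2+y^2 := Real.sq_sqrt hr2.le
  have hR : R = r^α := by
    change (x^2+y^2)^(α/2) = r^α
    rw [hr, Real.sqrt_eq_rpow, ← Real.rpow_mul hr2.le]; congr 1; ring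
  have hq : Real.sqrt (1 + (y/x)^2) = r / x := by
    rw [Real.sqrt_eq_iff_mul_self_eq (by positivity) (by positivity)]
    field_simp
    linarith
  have hcos : Real.cos β = x / r := by
    change Real.cos (Real.arctan (y/x)) = _
    rw [Real.cos_arctan, hq]; field_simp
  have hsin : Real.sin β = y / r := by
    change Real.sin (Real.arctan (y/x)) = _
    rw [Real.sin_arctan, hq]; field_simp
  have hsp : 0 < Real.sin β := by rw [hsin]; positivity
  have hcp : 0 < Real.cos β := by rw [hcos]; positivity
  have hsy : R * Real.sin β ^ α = y^α := by
    rw [hR, hsin, ← Real.mul_rpow hr0.le (by positivity)]; congr 1; field_simp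
  have hquot : x ^ (1+α) / y ^ (1+α) = Real.cos β ^ (α+1) / (Real.sin β * Real.sin β^α) := by
    rw [← Real.div_rpow hx.le hy.le]
    have : x / y = Real.cos β / Real.sin β := by rw [hcos, hsin]; field_simp
    rw [this, Real.div_rpow hcp.le hsp.le, Real.rpow_add hsp, Real.rpow_one, add_comm 1 α]
  have hRp : 0 < R := by rw [hR]; positivity
  change |ξbarC α x y| ≤ 162 * α^2 * (R / (1 + R)) * (y ^ α / (1 + y ^ α)^3)
    * min 1 (x ^ (1+α) / y ^ (1+α)) at hb
  rw [← hsy, hquot] at hb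
  have hsa : 0 < Real.sin β ^ α := by positivity
  have hca : 0 < Real.cos β ^ (α+1) := by positivity
  have hmain : β < Real.pi/4 ∨ Real.pi/4 ≤ β := lt_or_ge _ _
  rcases hmain with h | h
  · rw [if_pos h, if_neg (not_le.mpr h), add_zero]
    refine hb.trans ?_
    calc _ ≤ 162 * α^2 * (R / (1 + R)) *
            (R * Real.sin β ^ α / (1 + R * Real.sin β ^ α)^3) * 1 := by
          gcongr
          exact min_le_left _ _
      _ = 162 * ((α^2 * R^2 / (1+R)) * (Real.sin β ^ α / (1 + R * Real.sin β ^ α)^3)) := by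
          field_simp
      _ ≤ 2592 * ((α^2 * R^2 / (1+R)) * (Real.sin β ^ α / (1 + R * Real.sin β ^ α)^3)) := by
          gcongr
          norm_num
      _ = _ := by ring
  · rw [if_neg (not_lt.mpr h), if_pos h, zero_add]
    have hxy : x ≤ y := by
      have : Real.arctan 1 ≤ Real.arctan (y/x) := by rw [Real.arctan_one]; exact h
      have := Real.arctan_strictMono.le_iff_le.mp this
      rwa [le_div_iff₀ hx, one_mul] at this
    have hs2 : 1/2 ≤ Real.sin β := by
      rw [hsin, le_div_iff₀ hr0]
      nlinarith
    have hsa2 : 1/2 ≤ Real.sin β ^ α :=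
      hs2.trans (Real.self_le_rpow_of_le_one hsp.le (Real.sin_le_one β) (by linarith))
    refine hb.trans ?_
    calc _ ≤ 162 * α^2 * (R / (1 + R)) *
            (R * Real.sin β ^ α / (1 + R * Real.sin β ^ α)^3) *
            (Real.cos β ^ (α+1) / (Real.sin β * Real.sin β^α)) := by
          gcongr
          exact min_le_right _ _
      _ = 162 * ((α^2 * R^2 / (1+R)) * (Real.cos β ^ (α+1) /
            (Real.sin β * (1 + R * Real.sin β ^ α)^3))) := by
          field_simp
      _ ≤ 162 * ((α^2 * R^2 / (1+R)) * (Real.cos β ^ (α+1) /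
            (1/2 * ((1 + R)/2)^3))) := by
          gcongr
          nlinarith
      _ = _ := by field_simp; norm_num

end Paper
end
end

section
/- Fix α > 0. Let f : [0,∞)×(0,∞) → ℝ be twice continuously differentiable with f(0,y) = 0 for all y > 0, and define I(f)(x,y) = ∫_0^x f(z,y)/z dz. For a differentiable function g of (z,y) set (D_S g)(z,y) = (1/α)(z ∂_z g + y ∂_y g) and (D_τ g)(z,y) = 2y ∂_y g − 2α (y²/(y²+z²)) (D_S g)(z,y), and for a function F of (x,y) set (D_R F)(x,y) = (1/α)(x ∂_x F + y ∂_y F) and (D_β F)(x,y) = 2y ∂_y F − 2α (y²/(x²+y²)) (D_R F)(x,y). Then for all x, y > 0: (i) D_R I(f)(x,y) = I(D_S f)(x,y); (ii) D_β I(f)(x,y) − I(D_τ f)(x,y) = −2α (y²/(x²+y²)) I(D_S f)(x,y) + 2α I( (y²/(y²+z²)) D_S f )(x,y), where in the last term (y²/(y²+z²)) D_S f denotes the function (z,y) ↦ (y²/(y²+z²))(D_S f)(z,y). -/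
open Real MeasureTheory Set

noncomputable section

namespace Paper

lemma aux_bound (g : ℝ → ℝ → ℝ) (hg : ContDiff ℝ 1 (Function.uncurry g))
    (h0 : ∀ y : ℝ, 0 < y → g 0 y = 0) (x y : ℝ) (hy : 0 < y) :
    ∃ C : ℝ, ∀ z ∈ Ioo (0:ℝ) x, ∀ y' ∈ Icc (y/2) (2*y), ‖g z y' / z‖ ≤ C := by
  have hK : IsCompact (Icc (0:ℝ) x ×ˢ Icc (y/2) (2*y)) := isCompact_Icc.prod isCompact_Icc
  have hc : Continuous (fderiv ℝ (Function.uncurry g)) := hg.continuous_fderiv (by norm_num)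
  obtain ⟨C, hC⟩ := hK.exists_bound_of_continuousOn hc.continuousOn
  refine ⟨C, fun z hz y' hy' => ?_⟩
  have hconv : Convex ℝ (Icc (0:ℝ) x ×ˢ Icc (y/2) (2*y)) := (convex_Icc _ _).prod (convex_Icc _ _)
  have h1 := hconv.norm_image_sub_le_of_norm_fderiv_le (𝕜 := ℝ) (f := Function.uncurry g) (C := C)
    (fun p _ => (hg.differentiable (by norm_num)).differentiableAt) hC
    (x := (0, y')) (y := (z, y'))
    ⟨⟨le_refl _, (hz.1.trans hz.2).le⟩, hy'⟩ ⟨⟨hz.1.le, hz.2.le⟩, hy'⟩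
  have hy'0 : 0 < y' := by linarith [hy'.1]
  simp only [Function.uncurry, h0 y' hy'0, sub_zero, Prod.mk_sub_mk, sub_self] at h1
  have h2 : ‖((z, 0) : ℝ × ℝ)‖ = z := by
    simp [Prod.norm_def, abs_of_pos hz.1, hz.1.le]
  rw [h2] at h1
  rw [norm_div, Real.norm_of_nonneg hz.1.le, div_le_iff₀ hz.1]
  exact h1

lemma aux_meas (g : ℝ → ℝ → ℝ) (hg : ContDiff ℝ 1 (Function.uncurry g)) (y : ℝ) :
    Measurable (fun z => g z y / z) := by
  have h : Continuous (fun z => Function.uncurry g (z, y)) := hg.continuous.comp (by fun_prop)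
  exact (h.measurable).div measurable_id

lemma aux_int (g : ℝ → ℝ → ℝ) (hg : ContDiff ℝ 1 (Function.uncurry g))
    (h0 : ∀ y : ℝ, 0 < y → g 0 y = 0) (x y : ℝ) (hy : 0 < y) :
    IntegrableOn (fun z => g z y / z) (Ioo (0:ℝ) x) := by
  obtain ⟨C, hC⟩ := aux_bound g hg h0 x y hy
  refine Measure.integrableOn_of_bounded (M := C) (by simp)
    (aux_meas g hg y).aestronglyMeasurable ?_
  filter_upwards [ae_restrict_mem measurableSet_Ioo] with z hz
  exact hC z hz y ⟨by linarith, by linarith⟩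

lemma aux_dy (f : ℝ → ℝ → ℝ) (hf : ContDiff ℝ 2 (Function.uncurry f)) (z b : ℝ) :
    HasDerivAt (fun b' => f z b') (fderiv ℝ (Function.uncurry f) (z, b) (0, 1)) b := by
  have h1 : HasFDerivAt (Function.uncurry f) (fderiv ℝ (Function.uncurry f) (z, b)) (z, b) :=
    (hf.differentiable (by norm_num)).differentiableAt.hasFDerivAt
  have h2 : HasDerivAt (fun b' : ℝ => (z, b')) ((0:ℝ), (1:ℝ)) b :=
    (hasDerivAt_const b z).prodMk (hasDerivAt_id b)
  exact h1.comp_hasDerivAt b h2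

lemma aux_dx (f : ℝ → ℝ → ℝ) (hf : ContDiff ℝ 2 (Function.uncurry f)) (z b : ℝ) :
    HasDerivAt (fun z' => f z' b) (fderiv ℝ (Function.uncurry f) (z, b) (1, 0)) z := by
  have h1 : HasFDerivAt (Function.uncurry f) (fderiv ℝ (Function.uncurry f) (z, b)) (z, b) :=
    (hf.differentiable (by norm_num)).differentiableAt.hasFDerivAt
  have h2 : HasDerivAt (fun z' : ℝ => (z', b)) ((1:ℝ), (0:ℝ)) z :=
    (hasDerivAt_id z).prodMk (hasDerivAt_const z b)
  exact h1.comp_hasDerivAt z h2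

lemma aux_contDiff (f : ℝ → ℝ → ℝ) (hf : ContDiff ℝ 2 (Function.uncurry f)) (v : ℝ × ℝ) :
    ContDiff ℝ 1 (fun p : ℝ × ℝ => fderiv ℝ (Function.uncurry f) p v) :=
  (hf.fderiv_right (m := 1) (by norm_num)).clm_apply contDiff_const

lemma aux_Ix (g : ℝ → ℝ → ℝ) (hg : ContDiff ℝ 1 (Function.uncurry g))
    (h0 : ∀ y : ℝ, 0 < y → g 0 y = 0) (x y : ℝ) (hx : 0 < x) (hy : 0 < y) :
    HasDerivAt (fun x' => Ifun g x' y) (g x y / x) x := by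
  have hI : IntervalIntegrable (fun z => g z y / z) volume 0 x := by
    rw [intervalIntegrable_iff_integrableOn_Ioo_of_le hx.le]
    exact aux_int g hg h0 x y hy
  have hcg : Continuous (fun z => g z y) :=
    hg.continuous.comp (f := fun z : ℝ => (z, y)) (by fun_prop)
  have h := intervalIntegral.integral_hasDerivAt_right hI
    (aux_meas g hg y).stronglyMeasurable.stronglyMeasurableAtFilter
    (hcg.continuousAt.div continuousAt_id hx.ne')
  refine h.congr_of_eventuallyEq ?_
  filter_upwards [lt_mem_nhds hx] with x' hx'
  rw [Ifun, intervalIntegral.integral_of_le hx'.le, integral_Ioc_eq_integral_Ioo]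

theorem aux_Iy (f : ℝ → ℝ → ℝ) (hf : ContDiff ℝ 2 (Function.uncurry f))
    (hf0 : ∀ y : ℝ, 0 < y → f 0 y = 0)
    (hg0 : ∀ y : ℝ, 0 < y → fderiv ℝ (Function.uncurry f) (0, y) (0, 1) = 0)
    (x y : ℝ) (hy : 0 < y) :
    HasDerivAt (fun y' => Ifun f x y')
      (∫ z in Ioo (0:ℝ) x, fderiv ℝ (Function.uncurry f) (z, y) (0, 1) / z) y := by
  have hf1 : ContDiff ℝ 1 (Function.uncurry f) := hf.of_le (by norm_num)
  obtain ⟨C, hC⟩ := aux_bound (fun z b => fderiv ℝ (Function.uncurry f) (z, b) (0, 1))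
    (aux_contDiff f hf (0, 1)) hg0 x y hy
  refine (hasDerivAt_integral_of_dominated_loc_of_deriv_le
    (μ := volume.restrict (Ioo (0:ℝ) x)) (F := fun b z => f z b / z)
    (F' := fun b z => fderiv ℝ (Function.uncurry f) (z, b) (0, 1) / z)
    (bound := fun _ => C) (s := Icc (y/2) (2*y))
    (Icc_mem_nhds (by linarith) (by linarith)) ?_ ?_ ?_ ?_ ?_ ?_).2
  · exact Filter.Eventually.of_forall fun b => (aux_meas f hf1 b).aestronglyMeasurable
  · exact aux_int f hf1 hf0 x y hy
  · exact (aux_meas (fun z b => fderiv ℝ (Function.uncurry f) (z, b) (0, 1))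
      (aux_contDiff f hf (0, 1)) y).aestronglyMeasurable
  · filter_upwards [ae_restrict_mem measurableSet_Ioo] with z hz b hb
    exact hC z hz b hb
  · exact integrable_const _
  · exact Filter.Eventually.of_forall fun z b _ => (aux_dy f hf z b).div_const z

/-- commutator identities between the integral operator `I` and
the differential operators `D_R, D_β` (in Cartesian form). -/
theorem commutator_identities
    (α : ℝ) (hα : 0 < α) (f : ℝ → ℝ → ℝ)
    (hf : ContDiff ℝ 2 (Function.uncurry f)) (hf0 : ∀ y : ℝ, 0 < y → f 0 y = 0) :
    ∀ x : ℝ, 0 < x → ∀ y : ℝ, 0 < y →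
      DScart α (Ifun f) x y = Ifun (DScart α f) x y ∧
      DTcart α (Ifun f) x y - Ifun (DTcart α f) x y
        = -2*α*(y^2/(x^2+y^2)) * Ifun (DScart α f) x y
          + 2*α * Ifun (fun z y' => (y'^2/(y'^2+z^2)) * DScart α f z y') x y := by
  have hf1 : ContDiff ℝ 1 (Function.uncurry f) := hf.of_le (by norm_num)
  have hg0 : ∀ y : ℝ, 0 < y → fderiv ℝ (Function.uncurry f) (0, y) (0, 1) = 0 := by
    intro y hy
    refine (aux_dy f hf 0 y).unique ((hasDerivAt_const y (0:ℝ)).congr_of_eventuallyEq ?_)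
    filter_upwards [lt_mem_nhds hy] with b hb using hf0 b hb
  intro x hx y hy
  have hIx := (aux_Ix f hf1 hf0 x y hx hy).deriv
  have hIy := (aux_Iy f hf hf0 hg0 x y hy).deriv
  set gy : ℝ → ℝ := fun z => fderiv ℝ (Function.uncurry f) (z, y) (0, 1) with hgy
  set gx : ℝ → ℝ := fun z => fderiv ℝ (Function.uncurry f) (z, y) (1, 0) with hgx
  have hgyI : IntegrableOn (fun z => gy z / z) (Ioo (0:ℝ) x) :=
    aux_int (fun z b => fderiv ℝ (Function.uncurry f) (z, b) (0, 1))
      (aux_contDiff f hf (0, 1)) hg0 x y hy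
  have hgxc : Continuous gx :=
    (aux_contDiff f hf (1, 0)).continuous.comp (f := fun z : ℝ => (z, y)) (by fun_prop)
  have hgxI : IntegrableOn gx (Ioo (0:ℝ) x) :=
    (hgxc.integrableOn_Icc (a := 0) (b := x)).mono_set Ioo_subset_Icc_self
  have hgxint : ∫ z in Ioo (0:ℝ) x, gx z = f x y := by
    rw [← integral_Ioc_eq_integral_Ioo, ← intervalIntegral.integral_of_le hx.le,
      intervalIntegral.integral_eq_sub_of_hasDerivAt (f := fun z => f z y)
        (fun z _ => aux_dx f hf z y) (hgxc.intervalIntegrable _ _), hf0 y hy, sub_zero]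
  have hDS : ∀ z, DScart α f z y = (1/α) * (z * gx z + y * gy z) := by
    intro z
    simp only [DScart]
    rw [(aux_dx f hf z y).deriv, (aux_dy f hf z y).deriv]
  have hH : ∀ z ∈ Ioo (0:ℝ) x, DScart α f z y / z = (1/α) * (gx z + y * (gy z / z)) := by
    intro z hz
    have := hz.1.ne'
    rw [hDS]; field_simp
  have hHI' : IntegrableOn (fun z => (1/α) * (gx z + y * (gy z / z))) (Ioo (0:ℝ) x) :=
    (hgxI.add (hgyI.const_mul y)).const_mul (1/α)
  have hHI : IntegrableOn (fun z => DScart α f z y / z) (Ioo (0:ℝ) x) :=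
    hHI'.congr_fun (fun z hz => (hH z hz).symm) measurableSet_Ioo
  have hIDS : Ifun (DScart α f) x y
      = (1/α) * (f x y + y * ∫ z in Ioo (0:ℝ) x, gy z / z) := by
    simp only [Ifun]
    rw [setIntegral_congr_fun measurableSet_Ioo hH, integral_const_mul,
      integral_add hgxI (hgyI.const_mul y), integral_const_mul, hgxint]
  have h1 : DScart α (Ifun f) x y = Ifun (DScart α f) x y := by
    rw [hIDS]
    simp only [DScart]
    rw [hIx, hIy]
    field_simp
    rfl
  refine ⟨h1, ?_⟩
  have hWI : IntegrableOn (fun z => (y^2/(y^2+z^2)) * DScart α f z y / z) (Ioo (0:ℝ) x) := by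
    have hw : Continuous (fun z : ℝ => y^2/(y^2+z^2)) :=
      continuous_const.div (by fun_prop) (fun z => by positivity)
    have h := Integrable.bdd_mul (c := 1) hHI hw.aestronglyMeasurable
      (Filter.Eventually.of_forall fun z => by
        rw [Real.norm_of_nonneg (by positivity), div_le_one (by positivity)]
        nlinarith [sq_nonneg z])
    refine h.congr (Filter.Eventually.of_forall fun z => ?_)
    simp only [mul_div_assoc]
  have hDT : Ifun (DTcart α f) x y = 2*y * (∫ z in Ioo (0:ℝ) x, gy z / z)
      - 2*α * Ifun (fun z y' => (y'^2/(y'^2+z^2)) * DScart α f z y') x y := by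
    simp only [Ifun]
    rw [← integral_const_mul, ← integral_const_mul,
      ← integral_sub (hgyI.const_mul _) (hWI.const_mul _)]
    refine setIntegral_congr_fun measurableSet_Ioo fun z _ => ?_
    simp only [DTcart]
    rw [(aux_dy f hf z y).deriv]
    ring
  have hL : DTcart α (Ifun f) x y = 2*y * (∫ z in Ioo (0:ℝ) x, gy z / z)
      - 2*α*(y^2/(y^2+x^2)) * Ifun (DScart α f) x y := by
    rw [← h1]
    simp only [DTcart]
    rw [hIy]
  rw [hDT, hL, add_comm (x^2)]
  ring

end Paper
end
end

section
/- There is an absolute constant C such that for every α ∈ (0, 1/1000] and every twice continuously differentiable ξ with compact support contained in (0,∞)×(0,π/2): sup_{R>0, β∈(0,π/2)} R^{1/2} sin(2β)^{1/4} |ξ(R,β)| ≤ C ‖ξ‖_{H²(ψ)}. -/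
open Real MeasureTheory Set

noncomputable section

namespace Paper

lemma suppIn_DR {f : ℝ → ℝ → ℝ} (h : suppIn f) : suppIn (DR f) := by
  obtain ⟨K, hK, hKQ, h0⟩ := h
  refine ⟨K, hK, hKQ, fun x y hxy => ?_⟩
  have hev : (fun r => f r y) =ᶠ[nhds x] fun _ => 0 := by
    have : ∀ᶠ r in nhds x, (r, y) ∈ Kᶜ := by
      have hc : Continuous (fun r : ℝ => (r, y)) := by fun_prop
      exact hc.continuousAt.eventually (hK.isClosed.isOpen_compl.mem_nhds hxy)
    filter_upwards [this] with r hr using h0 r y hr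
  simp [DR, hev.deriv_eq]

lemma suppIn_Dbeta {f : ℝ → ℝ → ℝ} (h : suppIn f) : suppIn (Dbeta f) := by
  obtain ⟨K, hK, hKQ, h0⟩ := h
  refine ⟨K, hK, hKQ, fun x y hxy => ?_⟩
  have hev : (fun r => f x r) =ᶠ[nhds y] fun _ => 0 := by
    have : ∀ᶠ r in nhds y, (x, r) ∈ Kᶜ := by
      have hc : Continuous (fun r : ℝ => (x, r)) := by fun_prop
      exact hc.continuousAt.eventually (hK.isClosed.isOpen_compl.mem_nhds hxy)
    filter_upwards [this] with r hr using h0 x r hr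
  simp [Dbeta, hev.deriv_eq]

lemma hasDeriv_R {f : ℝ → ℝ → ℝ} (h : Differentiable ℝ (Function.uncurry f)) (R β : ℝ) :
    HasDerivAt (fun r => f r β) (fderiv ℝ (Function.uncurry f) (R, β) (1, 0)) R := by
  have h1 : HasDerivAt (fun r : ℝ => (r, β)) ((1:ℝ), (0:ℝ)) R :=
    (hasDerivAt_id R).prodMk (hasDerivAt_const R β)
  exact (h (R, β)).hasFDerivAt.comp_hasDerivAt R h1

lemma hasDeriv_b {f : ℝ → ℝ → ℝ} (h : Differentiable ℝ (Function.uncurry f)) (R β : ℝ) :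
    HasDerivAt (fun b => f R b) (fderiv ℝ (Function.uncurry f) (R, β) (0, 1)) β := by
  have h1 : HasDerivAt (fun b : ℝ => (R, b)) ((0:ℝ), (1:ℝ)) β :=
    (hasDerivAt_const β R).prodMk (hasDerivAt_id β)
  exact (h (R, β)).hasFDerivAt.comp_hasDerivAt β h1

lemma contDiff_DR {f : ℝ → ℝ → ℝ} (n : ℕ) (h : ContDiff ℝ (n+1) (Function.uncurry f)) :
    ContDiff ℝ n (Function.uncurry (DR f)) := by
  have hd : Differentiable ℝ (Function.uncurry f) := h.differentiable (by simp)
  have : Function.uncurry (DR f) =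
      fun p : ℝ × ℝ => p.1 * fderiv ℝ (Function.uncurry f) p (1, 0) := by
    ext ⟨R, β⟩
    simp [DR, Function.uncurry, (hasDeriv_R hd R β).deriv]
  rw [this]
  exact contDiff_fst.mul ((h.fderiv_right le_rfl).clm_apply contDiff_const)

lemma contDiff_Dbeta {f : ℝ → ℝ → ℝ} (n : ℕ) (h : ContDiff ℝ (n+1) (Function.uncurry f)) :
    ContDiff ℝ n (Function.uncurry (Dbeta f)) := by
  have hd : Differentiable ℝ (Function.uncurry f) := h.differentiable (by simp)
  have : Function.uncurry (Dbeta f) =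
      fun p : ℝ × ℝ => sin (2 * p.2) * fderiv ℝ (Function.uncurry f) p (0, 1) := by
    ext ⟨R, β⟩
    simp [Dbeta, Function.uncurry, (hasDeriv_b hd R β).deriv]
  rw [this]
  exact (contDiff_sin.comp (contDiff_const.mul contDiff_snd)).mul
    ((h.fderiv_right le_rfl).clm_apply contDiff_const)

lemma intOn_mul {h w : ℝ → ℝ → ℝ} (hc : Continuous (Function.uncurry h)) (hs : suppIn h)
    (hw : ContinuousOn (Function.uncurry w) Qdom) :
    IntegrableOn (fun p : ℝ × ℝ => w p.1 p.2 * h p.1 p.2 ^ 2) Qdom := by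
  obtain ⟨K, hK, hKQ, h0⟩ := hs
  have hc' : Continuous (fun p : ℝ × ℝ => h p.1 p.2) := hc
  have hw' : ContinuousOn (fun p : ℝ × ℝ => w p.1 p.2) Qdom := hw
  have h1 : IntegrableOn (fun p : ℝ × ℝ => w p.1 p.2 * h p.1 p.2 ^ 2) K :=
    ((hw'.mono hKQ).mul (hc'.pow 2).continuousOn).integrableOn_compact hK
  refine h1.of_forall_sdiff_eq_zero (measurableSet_Ioi.prod measurableSet_Ioo) ?_
  rintro ⟨x, y⟩ ⟨-, hx⟩
  simp [h0 x y hx]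

lemma sin2_pos {β : ℝ} (h : β ∈ Ioo (0:ℝ) (π/2)) : 0 < sin (2*β) :=
  sin_pos_of_pos_of_lt_pi (by linarith [h.1]) (by linarith [h.2])

lemma sincos_pos {β : ℝ} (h : β ∈ Ioo (0:ℝ) (π/2)) : 0 < sin β ∧ 0 < cos β :=
  ⟨sin_pos_of_pos_of_lt_pi h.1 (by linarith [h.2, pi_pos]),
    cos_pos_of_mem_Ioo ⟨by linarith [h.1, pi_pos], h.2⟩⟩

lemma rad_ge {R : ℝ} (hR : 0 < R) : 1 ≤ (1+R)^4 / R^4 := by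
  rw [one_le_div (by positivity)]
  gcongr
  linarith

lemma psi1_ge {R β : ℝ} (hR : 0 < R) (h : β ∈ Ioo (0:ℝ) (π/2)) :
    sin (2*β) ^ (-(1/2) : ℝ) ≤ psi1 R β := by
  obtain ⟨h1, h2⟩ := sincos_pos h
  have hx : 0 < sin β * cos β := mul_pos h1 h2
  have e : sin (2*β) = 2 * (sin β * cos β) := by rw [sin_two_mul]; ring
  have hx1 : sin β * cos β ≤ 1 := by linarith [sin_le_one (2*β)]
  calc sin (2*β) ^ (-(1/2) : ℝ) ≤ (sin β * cos β) ^ (-(1/2) : ℝ) :=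
        rpow_le_rpow_of_nonpos hx (by linarith) (by norm_num)
    _ ≤ (sin β * cos β) ^ (-(99/100) : ℝ) :=
        rpow_le_rpow_of_exponent_ge hx hx1 (by norm_num)
    _ ≤ psi1 R β := le_mul_of_one_le_left (by positivity) (rad_ge hR)

lemma psi2_ge {α R β : ℝ} (hα : 0 < α) (hR : 0 < R) (h : β ∈ Ioo (0:ℝ) (π/2)) :
    sin (2*β) ^ (-(1/2) : ℝ) ≤ psi2 α R β := by
  refine (psi1_ge hR h).trans ?_
  obtain ⟨h1, h2⟩ := sincos_pos h
  unfold psi1 psi2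
  rw [mul_rpow h1.le h2.le, mul_assoc]
  have : cos β ^ (-(99/100) : ℝ) ≤ cos β ^ (-(1 + α/10)) :=
    rpow_le_rpow_of_exponent_ge h2 (cos_le_one β) (by linarith)
  gcongr

lemma psi1_cont : ContinuousOn (Function.uncurry psi1) Qdom := by
  intro p hp
  obtain ⟨hR, hb⟩ := hp
  obtain ⟨h1, h2⟩ := sincos_pos hb
  have hR' : p.1 ≠ 0 := (show 0 < p.1 from hR).ne'
  apply ContinuousAt.continuousWithinAt
  show ContinuousAt (fun p : ℝ × ℝ => (1+p.1)^4 / p.1^4 *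
    (Real.sin p.2 * Real.cos p.2) ^ (-(99/100 : ℝ))) p
  refine ContinuousAt.mul (ContinuousAt.div (by fun_prop) (by fun_prop) (by positivity)) ?_
  exact ContinuousAt.rpow_const (by fun_prop) (Or.inl (mul_pos h1 h2).ne')

lemma psi2_cont (α : ℝ) : ContinuousOn (Function.uncurry (psi2 α)) Qdom := by
  intro p hp
  obtain ⟨hR, hb⟩ := hp
  obtain ⟨h1, h2⟩ := sincos_pos hb
  have hR' : p.1 ≠ 0 := (show 0 < p.1 from hR).ne'
  apply ContinuousAt.continuousWithinAt
  show ContinuousAt (fun p : ℝ × ℝ => (1+p.1)^4 / p.1^4 *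
    Real.sin p.2 ^ (-(99/100 : ℝ)) * Real.cos p.2 ^ (-(1 + α/10))) p
  refine ContinuousAt.mul (ContinuousAt.mul
    (ContinuousAt.div (by fun_prop) (by fun_prop) (by positivity)) ?_) ?_
  · exact ContinuousAt.rpow_const (by fun_prop) (Or.inl h1.ne')
  · exact ContinuousAt.rpow_const (by fun_prop) (Or.inl h2.ne')

/-- The comparison weight. -/
def w0 : ℝ → ℝ → ℝ := fun _ β => sin (2*β) ^ (-(1/2) : ℝ)

lemma w0_cont : ContinuousOn (Function.uncurry w0) Qdom := by
  intro p hp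
  apply ContinuousAt.continuousWithinAt
  show ContinuousAt (fun p : ℝ × ℝ => sin (2*p.2) ^ (-(1/2) : ℝ)) p
  exact ContinuousAt.rpow_const (by fun_prop) (Or.inl (sin2_pos hp.2).ne')

lemma norm_ge {h w : ℝ → ℝ → ℝ} (hc : Continuous (Function.uncurry h)) (hs : suppIn h)
    (hw : ContinuousOn (Function.uncurry w) Qdom)
    (hle : ∀ R > 0, ∀ β ∈ Ioo (0:ℝ) (π/2), w0 R β ≤ w R β) :
    ∫ p in Qdom, w0 p.1 p.2 * h p.1 p.2 ^ 2 ≤ norm2 (fun R β => h R β * √(w R β)) ^ 2 := by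
  have hm : MeasurableSet Qdom := measurableSet_Ioi.prod measurableSet_Ioo
  have hpos : ∀ R > 0, ∀ β ∈ Ioo (0:ℝ) (π/2), 0 ≤ w R β := fun R hR β hβ =>
    (rpow_nonneg (sin2_pos hβ).le _).trans (hle R hR β hβ)
  have e : inner2 (fun R β => h R β * √(w R β)) (fun R β => h R β * √(w R β)) =
      ∫ p in Qdom, w p.1 p.2 * h p.1 p.2 ^ 2 := by
    have hi := intOn_mul hc hs hw
    unfold Qdom at hi ⊢
    rw [Measure.volume_eq_prod] at hi ⊢
    rw [setIntegral_prod _ hi]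
    refine setIntegral_congr_fun measurableSet_Ioi fun R hR => ?_
    refine setIntegral_congr_fun measurableSet_Ioo fun β hβ => ?_
    have := mul_self_sqrt (hpos R hR β hβ)
    simp only
    linear_combination (h R β)^2 * this
  have hle' : ∫ p in Qdom, w0 p.1 p.2 * h p.1 p.2 ^ 2 ≤
      ∫ p in Qdom, w p.1 p.2 * h p.1 p.2 ^ 2 := by
    refine setIntegral_mono_on (intOn_mul hc hs w0_cont) (intOn_mul hc hs hw) hm ?_
    rintro ⟨R, β⟩ ⟨hR, hβ⟩
    exact mul_le_mul_of_nonneg_right (hle R hR β hβ) (sq_nonneg _)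
  have hn : 0 ≤ ∫ p in Qdom, w p.1 p.2 * h p.1 p.2 ^ 2 := by
    refine setIntegral_nonneg hm ?_
    rintro ⟨R, β⟩ ⟨hR, hβ⟩
    exact mul_nonneg (hpos R hR β hβ) (sq_nonneg _)
  unfold norm2
  rw [e, sq_sqrt hn]
  exact hle'

lemma slice_int {h : ℝ → ℝ → ℝ} (hc : Continuous (Function.uncurry h)) (hs : suppIn h) (β : ℝ) :
    Integrable (fun R => h R β ^ 2) := by
  obtain ⟨K, hK, hKQ, h0⟩ := hs
  have hc' : Continuous (fun R => h R β) :=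
    hc.comp (by fun_prop : Continuous fun R : ℝ => (R, β))
  refine (hc'.pow 2).integrable_of_hasCompactSupport ?_
  refine HasCompactSupport.intro (hK.image continuous_fst) fun x hx => ?_
  have : (x, β) ∉ K := fun hk => hx ⟨_, hk, rfl⟩
  simp [h0 x β this]

/-- The quadratic majorant. -/
def Wq (f : ℝ → ℝ → ℝ) (R β : ℝ) : ℝ :=
  4 * f R β ^ 2 + 2 * DR f R β ^ 2 + 2 * Dbeta f R β ^ 2 + DR (Dbeta f) R β ^ 2

lemma Wq_nonneg (f : ℝ → ℝ → ℝ) (R β : ℝ) : 0 ≤ Wq f R β := by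
  unfold Wq; positivity

section main
variable {f : ℝ → ℝ → ℝ} (hf : ContDiff ℝ 2 (Function.uncurry f)) (hs : suppIn f)

lemma facts (hf : ContDiff ℝ 2 (Function.uncurry f)) :
    ContDiff ℝ 1 (Function.uncurry (DR f)) ∧ ContDiff ℝ 1 (Function.uncurry (Dbeta f)) ∧
    Continuous (Function.uncurry (DR (Dbeta f))) := by
  have h1 := contDiff_DR 1 (f := f) (by norm_num; exact hf)
  have h2 := contDiff_Dbeta 1 (f := f) (by norm_num; exact hf)
  have h3 := contDiff_DR 0 (f := Dbeta f) (by norm_num; exact_mod_cast h2)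
  exact ⟨by exact_mod_cast h1, by exact_mod_cast h2, h3.continuous⟩

lemma step1 (hf : ContDiff ℝ 2 (Function.uncurry f)) (hs : suppIn f)
    {R : ℝ} (hR : 0 < R) (β c : ℝ) (hc : |c| ≤ 1) :
    R * (c * f R β ^ 2 + 2 * f R β * Dbeta f R β) ≤ ∫ r in Ioi (0:ℝ), Wq f r β := by
  obtain ⟨k1, k2, k3⟩ := facts hf
  have hW : Integrable (fun r => Wq f r β) := by
    unfold Wq
    exact ((((slice_int hf.continuous hs β).const_mul 4).add
      ((slice_int k1.continuous (suppIn_DR hs) β).const_mul 2)).add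
      ((slice_int k2.continuous (suppIn_Dbeta hs) β).const_mul 2)).add
      (slice_int k3 (suppIn_DR (suppIn_Dbeta hs)) β)
  have hd : ∀ r, HasDerivAt (fun r => r * (c * f r β ^ 2 + 2 * f r β * Dbeta f r β))
      (c * (f r β ^2 + 2 * f r β * DR f r β) + 2 * (f r β * Dbeta f r β
        + DR f r β * Dbeta f r β + f r β * DR (Dbeta f) r β)) r := by
    intro r
    have d1 := (hasDeriv_R (hf.differentiable (by simp)) r β).differentiableAt.hasDerivAt
    have d2 := (hasDeriv_R (k2.differentiable (by simp)) r β).differentiableAt.hasDerivAt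
    have := (hasDerivAt_id r).mul
      (((d1.pow 2).const_mul c).add ((d1.const_mul 2).mul d2))
    refine this.congr_deriv ?_
    simp only [DR, id, Pi.add_apply, Pi.mul_apply, Pi.pow_apply]
    push_cast
    ring
  have key := intervalIntegral.sub_le_integral_of_hasDeriv_right_of_le (a := 0) (b := R) hR.le
    (fun x _ => (hd x).continuousAt.continuousWithinAt)
    (fun x _ => (hd x).hasDerivWithinAt) (φ := fun r => Wq f r β) hW.integrableOn ?_
  · rw [zero_mul, sub_zero, intervalIntegral.integral_of_le hR.le] at key
    refine key.trans (setIntegral_mono_set hW.integrableOn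
      (Filter.Eventually.of_forall fun r => Wq_nonneg f r β) ?_)
    exact (Ioc_subset_Ioi_self).eventuallyLE
  · intro r _
    obtain ⟨c1, c2⟩ := abs_le.1 hc
    unfold Wq
    generalize f r β = a
    generalize DR f r β = b
    generalize Dbeta f r β = d
    generalize DR (Dbeta f) r β = e
    have h1 : c * (a^2 + 2*a*b) ≤ 2*a^2 + b^2 := by
      have : |c * (a^2 + 2*a*b)| ≤ 1 * (2*a^2+b^2) := by
        rw [abs_mul]
        refine mul_le_mul hc ?_ (abs_nonneg _) zero_le_one
        rw [abs_le]
        constructor <;> nlinarith [sq_nonneg (a+b), sq_nonneg (a-b), sq_nonneg a]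
      linarith [le_abs_self (c * (a^2 + 2*a*b))]
    nlinarith [sq_nonneg (a-d), sq_nonneg (b-d), sq_nonneg (a-e)]

lemma Wq_int (hf : ContDiff ℝ 2 (Function.uncurry f)) (hs : suppIn f) :
    IntegrableOn (fun p : ℝ × ℝ => w0 p.1 p.2 * Wq f p.1 p.2) Qdom ∧
    ∫ p in Qdom, w0 p.1 p.2 * Wq f p.1 p.2 =
      4 * (∫ p in Qdom, w0 p.1 p.2 * f p.1 p.2 ^ 2)
      + 2 * (∫ p in Qdom, w0 p.1 p.2 * DR f p.1 p.2 ^ 2)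
      + 2 * (∫ p in Qdom, w0 p.1 p.2 * Dbeta f p.1 p.2 ^ 2)
      + ∫ p in Qdom, w0 p.1 p.2 * DR (Dbeta f) p.1 p.2 ^ 2 := by
  obtain ⟨k1, k2, k3⟩ := facts hf
  have i1 := (intOn_mul hf.continuous hs w0_cont).const_mul 4
  have i2 := (intOn_mul k1.continuous (suppIn_DR hs) w0_cont).const_mul 2
  have i3 := (intOn_mul k2.continuous (suppIn_Dbeta hs) w0_cont).const_mul 2
  have i4 := (intOn_mul k3 (suppIn_DR (suppIn_Dbeta hs)) w0_cont)
  have e : (fun p : ℝ × ℝ => w0 p.1 p.2 * Wq f p.1 p.2) = fun p : ℝ × ℝ =>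
      4 * (w0 p.1 p.2 * f p.1 p.2 ^ 2) + 2 * (w0 p.1 p.2 * DR f p.1 p.2 ^ 2)
      + 2 * (w0 p.1 p.2 * Dbeta f p.1 p.2 ^ 2) + w0 p.1 p.2 * DR (Dbeta f) p.1 p.2 ^ 2 := by
    ext p; unfold Wq; ring
  rw [e]
  refine ⟨((i1.add i2).add i3).add i4, ?_⟩
  erw [integral_add ((i1.add i2).add i3) i4, integral_add (i1.add i2) i3, integral_add i1 i2,
    integral_const_mul, integral_const_mul, integral_const_mul]

lemma step2 (hf : ContDiff ℝ 2 (Function.uncurry f)) (hs : suppIn f)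
    {R : ℝ} (hR : 0 < R) {β : ℝ} (hβ : β ∈ Ioo (0:ℝ) (π/2)) :
    R * sin (2*β) ^ ((1:ℝ)/2) * f R β ^ 2 ≤ ∫ p in Qdom, w0 p.1 p.2 * Wq f p.1 p.2 := by
  have hi := (Wq_int hf hs).1
  unfold Qdom at hi ⊢
  rw [IntegrableOn, Measure.volume_eq_prod, ← Measure.prod_restrict] at hi
  rw [Measure.volume_eq_prod, ← Measure.prod_restrict, integral_prod_symm _ hi]
  have hφ := hi.integral_prod_right
  set φ : ℝ → ℝ := fun b => ∫ r in Ioi (0:ℝ), w0 r b * Wq f r b with hφd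
  have hφ' : IntegrableOn φ (Ioo (0:ℝ) (π/2)) := hφ
  have φe : ∀ b, φ b = sin (2*b) ^ (-(1/2) : ℝ) * ∫ r in Ioi (0:ℝ), Wq f r b := by
    intro b
    rw [hφd]
    simp only [w0]
    rw [integral_const_mul]
  have φn : ∀ b ∈ Ioo (0:ℝ) (π/2), 0 ≤ φ b := by
    intro b hb
    rw [φe]
    exact mul_nonneg (rpow_nonneg (sin2_pos hb).le _) (integral_nonneg fun r => Wq_nonneg f r b)
  have hI : IntegrableOn φ (Icc 0 β) := by
    rw [integrableOn_Icc_iff_integrableOn_Ioc]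
    exact hφ'.mono_set fun x hx => ⟨hx.1, hx.2.trans_lt hβ.2⟩
  have hcf : Continuous (fun b => f R b) :=
    hf.continuous.comp (by fun_prop : Continuous fun b : ℝ => (R, b))
  have hcont : Continuous (fun b => R * sin (2*b) ^ ((1:ℝ)/2) * f R b ^ 2) := by
    have : Continuous (fun b : ℝ => sin (2*b) ^ ((1:ℝ)/2)) :=
      Continuous.rpow_const (by fun_prop) (fun _ => Or.inr (by norm_num))
    fun_prop
  have hd : ∀ b ∈ Ioo (0:ℝ) β, HasDerivAt (fun b => R * sin (2*b) ^ ((1:ℝ)/2) * f R b ^ 2)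
      (sin (2*b) ^ (-(1/2) : ℝ) * (R * (cos (2*b) * f R b ^ 2 + 2 * f R b * Dbeta f R b))) b := by
    intro b hb
    have hb' : b ∈ Ioo (0:ℝ) (π/2) := ⟨hb.1, hb.2.trans hβ.2⟩
    have sp := sin2_pos hb'
    have d1 := (hasDeriv_b (hf.differentiable (by simp)) R b).differentiableAt.hasDerivAt
    have ds : HasDerivAt (fun b : ℝ => sin (2*b)) (cos (2*b) * 2) b := by
      simpa using ((hasDerivAt_id b).const_mul 2).sin
    have dr := ds.rpow_const (p := (1:ℝ)/2) (Or.inl sp.ne')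
    refine ((dr.const_mul R).mul (d1.pow 2)).congr_deriv ?_
    have e1 : sin (2*b) ^ ((1:ℝ)/2) = sin (2*b) ^ (-(1/2) : ℝ) * sin (2*b) := by
      conv_rhs => rw [← rpow_add_one sp.ne']
      norm_num
    have e2 : (1:ℝ)/2 - 1 = -(1/2) := by norm_num
    simp only [Dbeta, Pi.pow_apply]
    rw [e2, e1]
    push_cast
    ring
  have key := intervalIntegral.sub_le_integral_of_hasDeriv_right_of_le (a := 0) (b := β) hβ.1.le
    hcont.continuousOn (fun x hx => (hd x hx).hasDerivWithinAt) hI ?_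
  · have z : sin (2 * (0:ℝ)) ^ ((1:ℝ)/2) = 0 := by
      rw [mul_zero, sin_zero, zero_rpow (by norm_num)]
    rw [z, mul_zero, zero_mul, sub_zero, intervalIntegral.integral_of_le hβ.1.le] at key
    refine key.trans (setIntegral_mono_set hφ' ?_ ?_)
    · exact (ae_restrict_iff' measurableSet_Ioo).2 (Filter.Eventually.of_forall φn)
    · have hsub : Ioc 0 β ⊆ Ioo (0:ℝ) (π/2) := fun x hx => ⟨hx.1, hx.2.trans_lt hβ.2⟩
      exact hsub.eventuallyLE
  · intro b hb
    have hb' : b ∈ Ioo (0:ℝ) (π/2) := ⟨hb.1, hb.2.trans hβ.2⟩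
    rw [φe]
    exact mul_le_mul_of_nonneg_left (step1 hf hs hR b _ (abs_cos_le_one _))
      (rpow_nonneg (sin2_pos hb').le _)

end main

lemma norm2_nonneg (f : ℝ → ℝ → ℝ) : 0 ≤ norm2 f := sqrt_nonneg _

lemma Hnorm_ge1 (w1 w2 f : ℝ → ℝ → ℝ) (k : ℕ) (hk : k < 3) :
    norm2 (fun R β => DR^[k] f R β * √(w1 R β)) ≤ Hnorm 2 w1 w2 f := by
  unfold Hnorm
  have h1 := Finset.single_le_sum
    (f := fun k => norm2 (fun R β => DR^[k] f R β * √(w1 R β)))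
    (fun i _ => norm2_nonneg _) (Finset.mem_range.2 hk)
  refine le_trans h1 (le_add_of_nonneg_right (Finset.sum_nonneg fun i _ => norm2_nonneg _))

lemma Hnorm_ge2 (w1 w2 f : ℝ → ℝ → ℝ) (i : ℕ) (hi : i < 2) :
    norm2 (fun R β => DR^[i] (Dbeta f) R β * √(w2 R β)) ≤ Hnorm 2 w1 w2 f := by
  unfold Hnorm
  have h1 := Finset.single_le_sum
    (f := fun p : ℕ × ℕ => norm2 (fun R β => DR^[p.1] (Dbeta^[p.2+1] f) R β * √(w2 R β)))
    (s := (Finset.range (2+1) ×ˢ Finset.range (2+1)).filter (fun p => p.1 + p.2 + 1 ≤ 2))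
    (fun i _ => norm2_nonneg _) (a := (i, 0))
    (by simp only [Finset.mem_filter, Finset.mem_product, Finset.mem_range]; omega)
  exact le_trans h1 (le_add_of_nonneg_left (Finset.sum_nonneg fun i _ => norm2_nonneg _))

/-- decay estimate `R^{1/2} sin(2β)^{1/4} |ξ| ≲ ‖ξ‖_{H²(ψ)}`. -/
theorem xi_decay_estimate :
    ∃ C : ℝ, ∀ α : ℝ, 0 < α → α ≤ 1/1000 →
      ∀ ξ : ℝ → ℝ → ℝ, ContDiff ℝ 2 (Function.uncurry ξ) → suppIn ξ →
        ∀ R > (0:ℝ), ∀ β ∈ Set.Ioo (0:ℝ) (Real.pi/2),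
          R ^ ((1:ℝ)/2) * Real.sin (2*β) ^ ((1:ℝ)/4) * |ξ R β|
            ≤ C * Hnorm 2 psi1 (psi2 α) ξ := by
  refine ⟨3, fun α hα _ ξ hf hs R hR β hβ => ?_⟩
  obtain ⟨k1, k2, k3⟩ := facts hf
  set H := Hnorm 2 psi1 (psi2 α) ξ with hH
  have g1 : ∀ R > 0, ∀ β ∈ Ioo (0:ℝ) (π/2), w0 R β ≤ psi1 R β := fun R hR β hβ => psi1_ge hR hβ
  have g2 : ∀ R > 0, ∀ β ∈ Ioo (0:ℝ) (π/2), w0 R β ≤ psi2 α R β :=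
    fun R hR β hβ => psi2_ge hα hR hβ
  have a1 := (norm_ge hf.continuous hs psi1_cont g1).trans
    (pow_le_pow_left₀ (norm2_nonneg _) (Hnorm_ge1 psi1 (psi2 α) ξ 0 (by norm_num)) 2)
  have a2 := (norm_ge k1.continuous (suppIn_DR hs) psi1_cont g1).trans
    (pow_le_pow_left₀ (norm2_nonneg _) (Hnorm_ge1 psi1 (psi2 α) ξ 1 (by norm_num)) 2)
  have a3 := (norm_ge k2.continuous (suppIn_Dbeta hs) (psi2_cont α) g2).trans
    (pow_le_pow_left₀ (norm2_nonneg _) (Hnorm_ge2 psi1 (psi2 α) ξ 0 (by norm_num)) 2)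
  have a4 := (norm_ge k3 (suppIn_DR (suppIn_Dbeta hs)) (psi2_cont α) g2).trans
    (pow_le_pow_left₀ (norm2_nonneg _) (Hnorm_ge2 psi1 (psi2 α) ξ 1 (by norm_num)) 2)
  have hH0 : 0 ≤ H := (norm2_nonneg _).trans (Hnorm_ge1 psi1 (psi2 α) ξ 0 (by norm_num))
  have h2 := step2 hf hs hR hβ
  rw [(Wq_int hf hs).2] at h2
  have sp := sin2_pos hβ
  refine (sq_le_sq₀ (by positivity) (by positivity)).1 ?_
  have e1 : (R ^ ((1:ℝ)/2)) ^ 2 = R := by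
    rw [← rpow_natCast, ← rpow_mul hR.le]; norm_num
  have e2 : (sin (2*β) ^ ((1:ℝ)/4)) ^ 2 = sin (2*β) ^ ((1:ℝ)/2) := by
    rw [← rpow_natCast, ← rpow_mul sp.le]; norm_num
  rw [mul_pow, mul_pow, e1, e2, sq_abs]
  linarith


end Paper
end
end

section
/- There is an absolute constant C such that for every α ∈ (0, 1/1000] and every three times continuously differentiable f with compact support contained in (0,∞)×(0,π/2): ‖f‖_{L^∞} ≤ C α^{−1/2} ‖f‖_{H²} and ‖f‖_{C¹} ≤ C α^{−1/2} ‖f‖_{H³}. -/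
open Real MeasureTheory Set

noncomputable section

namespace Paper

/-- `v` is `Cⁿ` and vanishes off `K`. -/
def Good (n : ℕ) (K : Set (ℝ × ℝ)) (v : ℝ → ℝ → ℝ) : Prop :=
  ContDiff ℝ n (Function.uncurry v) ∧ ∀ x y : ℝ, (x, y) ∉ K → v x y = 0

lemma hasDerivAt_fst {v : ℝ → ℝ → ℝ} (hv : Differentiable ℝ (Function.uncurry v)) (x y : ℝ) :
    HasDerivAt (fun r => v r y) (fderiv ℝ (Function.uncurry v) (x, y) (1, 0)) x := by
  have h1 : HasDerivAt (fun r : ℝ => (r, y)) ((1:ℝ), (0:ℝ)) x :=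
    (hasDerivAt_id x).prodMk (hasDerivAt_const x y)
  exact ((hv (x, y)).hasFDerivAt).comp_hasDerivAt x h1

lemma hasDerivAt_snd {v : ℝ → ℝ → ℝ} (hv : Differentiable ℝ (Function.uncurry v)) (x y : ℝ) :
    HasDerivAt (fun b => v x b) (fderiv ℝ (Function.uncurry v) (x, y) (0, 1)) y := by
  have h1 : HasDerivAt (fun b : ℝ => (x, b)) ((0:ℝ), (1:ℝ)) y :=
    (hasDerivAt_const y x).prodMk (hasDerivAt_id y)
  exact ((hv (x, y)).hasFDerivAt).comp_hasDerivAt y h1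

lemma DR_eq {v : ℝ → ℝ → ℝ} (hv : Differentiable ℝ (Function.uncurry v)) (x y : ℝ) :
    DR v x y = x * fderiv ℝ (Function.uncurry v) (x, y) (1, 0) := by
  unfold DR; rw [(hasDerivAt_fst hv x y).deriv]

lemma Dbeta_eq {v : ℝ → ℝ → ℝ} (hv : Differentiable ℝ (Function.uncurry v)) (x y : ℝ) :
    Dbeta v x y = Real.sin (2*y) * fderiv ℝ (Function.uncurry v) (x, y) (0, 1) := by
  unfold Dbeta; rw [(hasDerivAt_snd hv x y).deriv]

lemma Good.diff {n : ℕ} {K : Set (ℝ × ℝ)} {v : ℝ → ℝ → ℝ} (h : Good (n+1) K v) :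
    Differentiable ℝ (Function.uncurry v) :=
  h.1.differentiable (by simp)

lemma Good.fderiv_zero {n : ℕ} {K : Set (ℝ × ℝ)} (hK : IsClosed K) {v : ℝ → ℝ → ℝ}
    (h : Good n K v) (p : ℝ × ℝ) (hp : p ∉ K) :
    fderiv ℝ (Function.uncurry v) p = 0 := by
  have : Function.uncurry v =ᶠ[nhds p] fun _ => (0:ℝ) := by
    filter_upwards [hK.isOpen_compl.mem_nhds hp] with q hq
    exact h.2 q.1 q.2 hq
  rw [this.fderiv_eq]; simp

lemma Good.DR {n : ℕ} {K : Set (ℝ × ℝ)} (hK : IsClosed K) {v : ℝ → ℝ → ℝ}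
    (h : Good (n+1) K v) : Good n K (DR v) := by
  constructor
  · have : Function.uncurry (Paper.DR v)
        = fun p : ℝ × ℝ => p.1 * fderiv ℝ (Function.uncurry v) p (1, 0) := by
      ext ⟨x, y⟩; exact DR_eq h.diff x y
    rw [this]
    exact contDiff_fst.mul ((h.1.fderiv_right (by simp)).clm_apply contDiff_const)
  · intro x y hxy
    rw [DR_eq h.diff, h.fderiv_zero hK _ hxy]; simp

lemma Good.Dbeta {n : ℕ} {K : Set (ℝ × ℝ)} (hK : IsClosed K) {v : ℝ → ℝ → ℝ}
    (h : Good (n+1) K v) : Good n K (Dbeta v) := by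
  constructor
  · have : Function.uncurry (Paper.Dbeta v)
        = fun p : ℝ × ℝ => Real.sin (2 * p.2) * fderiv ℝ (Function.uncurry v) p (0, 1) := by
      ext ⟨x, y⟩; exact Dbeta_eq h.diff x y
    rw [this]
    exact (Real.contDiff_sin.comp (contDiff_const.mul contDiff_snd)).mul
      ((h.1.fderiv_right (by simp)).clm_apply contDiff_const)
  · intro x y hxy
    rw [Dbeta_eq h.diff, h.fderiv_zero hK _ hxy]; simp

lemma Good.mono {n m : ℕ} (hnm : m ≤ n) {K : Set (ℝ × ℝ)} {v : ℝ → ℝ → ℝ}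
    (h : Good n K v) : Good m K v := ⟨h.1.of_le (by exact_mod_cast hnm), h.2⟩

lemma Good.comm {K : Set (ℝ × ℝ)} {v : ℝ → ℝ → ℝ}
    (h : Good 2 K v) : Paper.Dbeta (Paper.DR v) = Paper.DR (Paper.Dbeta v) := by
  ext x y
  set F := Function.uncurry v with hF
  have hd : Differentiable ℝ F := h.diff (n := 1)
  have hd2 : Differentiable ℝ (fderiv ℝ F) :=
    (h.1.fderiv_right (m := 1) (by norm_num)).differentiable (by simp)
  have hs := (h.1.contDiffAt (x := (x, y))).isSymmSndFDerivAt (by simp)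
  have e1 : ∀ y', Paper.DR v x y' = x * fderiv ℝ F (x, y') (1, 0) := fun y' => DR_eq hd x y'
  have e2 : ∀ x', Paper.Dbeta v x' y = Real.sin (2*y) * fderiv ℝ F (x', y) (0, 1) :=
    fun x' => Dbeta_eq hd x' y
  have d1 : HasDerivAt (fun y' => fderiv ℝ F (x, y') (1, 0))
      (fderiv ℝ (fderiv ℝ F) (x, y) (0, 1) (1, 0)) y := by
    have h1 : HasDerivAt (fun b : ℝ => (x, b)) ((0:ℝ), (1:ℝ)) y :=
      (hasDerivAt_const y x).prodMk (hasDerivAt_id y)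
    have := ((hd2 (x, y)).hasFDerivAt).comp_hasDerivAt y h1
    simpa using this.clm_apply (hasDerivAt_const y ((1:ℝ), (0:ℝ)))
  have d2 : HasDerivAt (fun x' => fderiv ℝ F (x', y) (0, 1))
      (fderiv ℝ (fderiv ℝ F) (x, y) (1, 0) (0, 1)) x := by
    have h1 : HasDerivAt (fun r : ℝ => (r, y)) ((1:ℝ), (0:ℝ)) x :=
      (hasDerivAt_id x).prodMk (hasDerivAt_const x y)
    have := ((hd2 (x, y)).hasFDerivAt).comp_hasDerivAt x h1
    simpa using this.clm_apply (hasDerivAt_const x ((0:ℝ), (1:ℝ)))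
  have l : Paper.Dbeta (Paper.DR v) x y
      = Real.sin (2*y) * (x * fderiv ℝ (fderiv ℝ F) (x, y) (0, 1) (1, 0)) := by
    show Real.sin (2*y) * deriv (fun b => Paper.DR v x b) y = _
    rw [show (fun b => Paper.DR v x b) = fun y' => x * fderiv ℝ F (x, y') (1, 0) from funext e1,
      (d1.const_mul x).deriv]
  have r : Paper.DR (Paper.Dbeta v) x y
      = x * (Real.sin (2*y) * fderiv ℝ (fderiv ℝ F) (x, y) (1, 0) (0, 1)) := by
    show x * deriv (fun r => Paper.Dbeta v r y) x = _
    rw [show (fun r => Paper.Dbeta v r y) = fun x' => Real.sin (2*y) * fderiv ℝ F (x', y) (0, 1)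
      from funext e2, (d2.const_mul _).deriv]
  rw [l, r, hs.eq (0, 1) (1, 0)]; ring

/-- restricted measures -/
abbrev μR : Measure ℝ := volume.restrict (Set.Ioi (0:ℝ))
abbrev μB : Measure ℝ := volume.restrict (Set.Ioo (0:ℝ) (Real.pi/2))

lemma prod_eq : μR.prod μB = (volume : Measure (ℝ × ℝ)).restrict Qdom := by
  unfold μR μB Qdom
  rw [Measure.prod_restrict]; rfl

lemma sin_pos_of {y : ℝ} (hy : y ∈ Set.Ioo (0:ℝ) (Real.pi/2)) : 0 < Real.sin (2*y) :=
  Real.sin_pos_of_pos_of_lt_pi (by linarith [hy.1]) (by linarith [hy.2])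

lemma phi2_pos (α : ℝ) {x y : ℝ} (hx : 0 < x) (hy : y ∈ Set.Ioo (0:ℝ) (Real.pi/2)) :
    0 < phi2 α x y := by
  have := sin_pos_of hy
  unfold phi2; positivity

lemma measurable_phi2 (α : ℝ) : Measurable (fun p : ℝ × ℝ => phi2 α p.1 p.2) := by
  unfold phi2; fun_prop

lemma phi2_cont (α : ℝ) : ContinuousOn (fun p : ℝ × ℝ => phi2 α p.1 p.2) Qdom := by
  unfold phi2
  apply ContinuousOn.mul
  · apply ContinuousOn.div (by fun_prop) (by fun_prop)
    rintro ⟨x, y⟩ ⟨hx, hy⟩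
    have : (0:ℝ) < x := hx
    positivity
  · apply ContinuousOn.rpow_const (by fun_prop)
    rintro ⟨x, y⟩ ⟨hx, hy⟩
    exact Or.inl (sin_pos_of hy).ne'

/-- norm with weight -/
def N2 (α : ℝ) (v : ℝ → ℝ → ℝ) : ℝ := norm2 (fun R β => v R β * Real.sqrt (phi2 α R β))

lemma N2_nonneg (α : ℝ) (v) : 0 ≤ N2 α v := Real.sqrt_nonneg _

lemma N2_eq {K : Set (ℝ × ℝ)} (hK : IsCompact K) (hKQ : K ⊆ Qdom) {v : ℝ → ℝ → ℝ}
    (h : Good 0 K v) (α : ℝ) :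
    (∫⁻ p, ‖v p.1 p.2 * Real.sqrt (phi2 α p.1 p.2)‖ₑ ^ (2:ℝ) ∂(μR.prod μB)) ^ (1/(2:ℝ))
      = ENNReal.ofReal (N2 α v) := by
  set A : ℝ × ℝ → ℝ := fun p => v p.1 p.2 * Real.sqrt (phi2 α p.1 p.2) with hA
  have hc : ContinuousOn (fun p => A p * A p) K := by
    have h1 : ContinuousOn A K := by
      apply ContinuousOn.mul
      · exact (h.1.continuous).continuousOn
      · exact ((phi2_cont α).mono hKQ).sqrt
    exact h1.mul h1
  have hint : Integrable (fun p => A p * A p) (volume : Measure (ℝ × ℝ)) := by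
    rw [← integrableOn_iff_integrable_of_support_subset (s := K)]
    · exact hc.integrableOn_compact hK
    · intro p hp
      by_contra hpK
      apply hp
      simp [hA, h.2 p.1 p.2 hpK]
  have hint' : Integrable (fun p => A p * A p) (μR.prod μB) := by
    rw [prod_eq]; exact hint.integrableOn
  have e1 : N2 α v = Real.sqrt (∫ p, A p * A p ∂(μR.prod μB)) := by
    rw [integral_prod _ hint']; rfl
  have e2 : ∫⁻ p, ‖A p‖ₑ ^ (2:ℝ) ∂(μR.prod μB) = ENNReal.ofReal (∫ p, A p * A p ∂(μR.prod μB)) := by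
    rw [ofReal_integral_eq_lintegral_ofReal hint' (Filter.Eventually.of_forall
      fun p => mul_self_nonneg _)]
    congr 1; ext p
    rw [← ofReal_norm, ENNReal.ofReal_rpow_of_nonneg (norm_nonneg _) (by norm_num)]
    congr 1
    rw [Real.norm_eq_abs, Real.rpow_two, sq_abs, sq]
  rw [e2, e1, ENNReal.ofReal_rpow_of_nonneg
    (integral_nonneg fun p => mul_self_nonneg _) (by norm_num), Real.sqrt_eq_rpow]

/-- The Cauchy-Schwarz dual weight. -/
def Wt (α a b : ℝ) (r y : ℝ) : ℝ :=
  r ^ (-1 - a) * Real.sin (2*y) ^ (-1 - b) * (Real.sqrt (phi2 α r y))⁻¹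

lemma measurable_Wt (α a b : ℝ) : Measurable (fun p : ℝ × ℝ => Wt α a b p.1 p.2) := by
  have := measurable_phi2 α
  unfold Wt; fun_prop

lemma sin_rpow_le {δ : ℝ} (hδ : δ ≤ 1) {y : ℝ} (hy : y ∈ Set.Ioo (0:ℝ) (Real.pi/2)) :
    Real.sin (2*y) ^ (δ - 1) ≤ y ^ (δ - 1) + (Real.pi/2 - y) ^ (δ - 1) := by
  obtain ⟨h0, h1⟩ := hy
  have h1' : 0 < Real.pi/2 - y := by linarith
  have hp : 1 ≤ 4 / Real.pi := by
    rw [le_div_iff₀ Real.pi_pos]; linarith [Real.pi_le_four]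
  have hA := Real.rpow_nonneg h0.le (δ - 1)
  have hB := Real.rpow_nonneg h1'.le (δ - 1)
  rcases le_total y (Real.pi/4) with h | h
  · have hs : y ≤ Real.sin (2*y) := by
      have := Real.mul_le_sin (x := 2*y) (by linarith) (by linarith)
      have h2 : 2 / Real.pi * (2*y) = 4 / Real.pi * y := by ring
      nlinarith
    have := Real.rpow_le_rpow_of_nonpos h0 hs (by linarith : δ - 1 ≤ 0)
    linarith
  · have hs : Real.pi/2 - y ≤ Real.sin (2*y) := by
      have := Real.mul_le_sin (x := Real.pi - 2*y) (by linarith) (by linarith)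
      rw [Real.sin_pi_sub] at this
      have h2 : 2 / Real.pi * (Real.pi - 2*y) = 4 / Real.pi * (Real.pi/2 - y) := by ring
      nlinarith
    have := Real.rpow_le_rpow_of_nonpos h1' hs (by linarith : δ - 1 ≤ 0)
    linarith

lemma Wt_sq_le {α a b : ℝ} (hα : 0 < α) (hα1 : α ≤ 1/1000) (ha : 0 ≤ a) (ha1 : a ≤ 1)
    (hb1 : b ≤ α/40) {r y : ℝ} (hr : 0 < r)
    (hy : y ∈ Set.Ioo (0:ℝ) (Real.pi/2)) :
    Wt α a b r y ^ 2 ≤ (r + 1) ^ (-2:ℝ) *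
      (y ^ (α/20 - 1) + (Real.pi/2 - y) ^ (α/20 - 1)) := by
  have hs := sin_pos_of hy
  have hs1 := Real.sin_le_one (2*y)
  have hphi := phi2_pos α hr hy
  have key := sin_rpow_le (δ := α/20) (by linarith) hy
  set s := Real.sin (2*y) with hsdef
  have e : Wt α a b r y ^ 2 = r ^ (2 - 2*a) / (1+r)^4 * s ^ (α/10 - 1 - 2*b) := by
    unfold Wt
    rw [mul_pow, mul_pow, inv_pow, Real.sq_sqrt hphi.le]
    unfold phi2
    rw [← hsdef]
    have e1 : (r ^ (-1 - a)) ^ 2 * r ^ 4 = r ^ (2 - 2*a) := by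
      rw [← Real.rpow_natCast, ← Real.rpow_mul hr.le, ← Real.rpow_natCast r 4, ← Real.rpow_add hr]
      congr 1; push_cast; ring
    have e2 : (s ^ (-1 - b)) ^ 2 * s ^ (1 + α/10) = s ^ (α/10 - 1 - 2*b) := by
      rw [← Real.rpow_natCast, ← Real.rpow_mul hs.le, ← Real.rpow_add hs]
      congr 1; push_cast; ring
    rw [← e1, ← e2, Real.rpow_neg hs.le]
    have : 0 < s ^ (1 + α/10) := by positivity
    field_simp
  rw [e]
  have h1 : r ^ (2 - 2*a) / (1+r)^4 ≤ (r+1) ^ (-2:ℝ) := by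
    have : r ^ (2 - 2*a) ≤ (1+r) ^ (2:ℝ) :=
      (Real.rpow_le_rpow hr.le (by linarith : r ≤ 1 + r) (by linarith)).trans
        (Real.rpow_le_rpow_of_exponent_le (by linarith) (by linarith))
    rw [Real.rpow_two] at this
    rw [Real.rpow_neg (by linarith), Real.rpow_two, add_comm r 1, div_le_iff₀ (by positivity)]
    calc _ ≤ _ := this
      _ = _ := by field_simp
  have h2 : s ^ (α/10 - 1 - 2*b) ≤ s ^ (α/20 - 1) :=
    Real.rpow_le_rpow_of_exponent_ge hs hs1 (by linarith)
  gcongr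
  exact h2.trans key

lemma lint_rpow {δ : ℝ} (hδ : 0 < δ) (hδ1 : δ ≤ 1) :
    ∫⁻ y, ENNReal.ofReal (y ^ (δ - 1) + (Real.pi/2 - y) ^ (δ - 1)) ∂μB
      ≤ ENNReal.ofReal (4 / δ) := by
  have hpi := Real.pi_pos
  have i1 : IntervalIntegrable (fun y : ℝ => y ^ (δ - 1)) volume 0 (Real.pi/2) :=
    intervalIntegral.intervalIntegrable_rpow' (by linarith)
  have i2 : IntervalIntegrable (fun y : ℝ => (Real.pi/2 - y) ^ (δ - 1)) volume 0 (Real.pi/2) := by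
    have := (i1.comp_sub_left (Real.pi/2)).symm
    simpa using this
  have hint := i1.add i2
  rw [intervalIntegrable_iff_integrableOn_Ioo_of_le (by linarith)] at hint
  rw [← ofReal_integral_eq_lintegral_ofReal hint]
  · apply ENNReal.ofReal_le_ofReal
    have : ∫ y in Set.Ioo 0 (Real.pi/2), (y ^ (δ - 1) + (Real.pi/2 - y) ^ (δ - 1))
        = ∫ y in (0:ℝ)..(Real.pi/2), (y ^ (δ - 1) + (Real.pi/2 - y) ^ (δ - 1)) := by
      rw [intervalIntegral.integral_of_le (by linarith), integral_Ioc_eq_integral_Ioo]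
    show ∫ y in Set.Ioo 0 (Real.pi/2), (y ^ (δ - 1) + (Real.pi/2 - y) ^ (δ - 1)) ≤ _
    rw [this, intervalIntegral.integral_add i1 i2]
    rw [intervalIntegral.integral_comp_sub_left (fun y : ℝ => y ^ (δ - 1)) (Real.pi/2)]
    simp only [sub_self, sub_zero]
    rw [integral_rpow (Or.inl (by linarith))]
    simp only [sub_add_cancel]
    rw [Real.zero_rpow hδ.ne', sub_zero, ← add_div]
    gcongr
    have : (Real.pi/2) ^ δ ≤ 2 := by
      calc (Real.pi/2) ^ δ ≤ 2 ^ δ :=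
            Real.rpow_le_rpow (by linarith) (by linarith [Real.pi_le_four]) hδ.le
        _ ≤ 2 ^ (1:ℝ) := Real.rpow_le_rpow_of_exponent_le (by norm_num) hδ1
        _ = 2 := by norm_num
    linarith
  · filter_upwards [ae_restrict_mem measurableSet_Ioo] with y hy
    have : 0 ≤ Real.pi/2 - y := by linarith [hy.2]
    have := Real.rpow_nonneg this (δ - 1)
    have := Real.rpow_nonneg hy.1.le (δ - 1)
    simp only [Pi.zero_apply]; linarith

/-- constant -/
def M0 : ℝ := ∫ r, (r + 1) ^ (-2:ℝ) ∂μR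

lemma M0_nonneg : 0 ≤ M0 := by
  apply setIntegral_nonneg measurableSet_Ioi
  intro r hr
  have : (0:ℝ) < r := hr
  positivity

lemma lint_R : ∫⁻ r, ENNReal.ofReal ((r + 1) ^ (-2:ℝ)) ∂μR = ENNReal.ofReal M0 := by
  unfold M0
  rw [ofReal_integral_eq_lintegral_ofReal]
  · exact integrableOn_add_rpow_Ioi_of_lt (by norm_num) (by norm_num)
  · filter_upwards [ae_restrict_mem measurableSet_Ioi] with r hr
    have : (0:ℝ) < r := hr
    simp only [Pi.zero_apply]; positivity

def C0 : ℝ := Real.sqrt (M0 * 80)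

lemma lint_Wt {α a b : ℝ} (hα : 0 < α) (hα1 : α ≤ 1/1000) (ha : 0 ≤ a) (ha1 : a ≤ 1)
    (hb1 : b ≤ α/40) :
    (∫⁻ p, ‖Wt α a b p.1 p.2‖ₑ ^ (2:ℝ) ∂(μR.prod μB)) ^ (1/(2:ℝ))
      ≤ ENNReal.ofReal (C0 * α ^ (-(1/2 : ℝ))) := by
  have h1 : ∫⁻ p, ‖Wt α a b p.1 p.2‖ₑ ^ (2:ℝ) ∂(μR.prod μB)
      ≤ ∫⁻ p, ENNReal.ofReal ((p.1 + 1) ^ (-2:ℝ)) *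
        ENNReal.ofReal (p.2 ^ (α/20 - 1) + (Real.pi/2 - p.2) ^ (α/20 - 1)) ∂(μR.prod μB) := by
    rw [prod_eq]
    apply setLIntegral_mono' (measurableSet_Ioi.prod measurableSet_Ioo)
    rintro ⟨r, y⟩ ⟨hr, hy⟩
    have hr' : (0:ℝ) < r := hr
    rw [← ENNReal.ofReal_mul (by positivity), ← ofReal_norm,
      ENNReal.ofReal_rpow_of_nonneg (norm_nonneg _) (by norm_num)]
    apply ENNReal.ofReal_le_ofReal
    rw [Real.norm_eq_abs, Real.rpow_two, sq_abs]
    exact Wt_sq_le hα hα1 ha ha1 hb1 hr' hy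
  rw [lintegral_prod_mul (f := fun r : ℝ => ENNReal.ofReal ((r + 1) ^ (-2:ℝ)))
    (g := fun y : ℝ => ENNReal.ofReal (y ^ (α/20 - 1) + (Real.pi/2 - y) ^ (α/20 - 1)))
    (by fun_prop) (by fun_prop), lint_R] at h1
  have h2 := h1.trans (mul_le_mul_right (lint_rpow (δ := α/20) (by linarith) (by linarith)) _)
  rw [← ENNReal.ofReal_mul M0_nonneg] at h2
  calc _ ≤ (ENNReal.ofReal (M0 * (4 / (α/20)))) ^ (1/(2:ℝ)) :=
        ENNReal.rpow_le_rpow h2 (by norm_num)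
    _ = _ := by
      have hM := M0_nonneg
      rw [ENNReal.ofReal_rpow_of_nonneg (by positivity) (by norm_num)]
      congr 1
      rw [show M0 * (4 / (α/20)) = (M0 * 80) * α⁻¹ by field_simp; ring,
        Real.mul_rpow (by positivity) (by positivity), ← Real.sqrt_eq_rpow, C0,
        Real.rpow_neg hα.le, Real.inv_rpow hα.le]

/-- first derivative of the weighted function -/
def G1 (a b : ℝ) (u : ℝ → ℝ → ℝ) (r y : ℝ) : ℝ :=
  r ^ (-a) * Real.sin (2*y) ^ (-1 - b) *
    (Dbeta u r y - 2 * b * Real.cos (2*y) * u r y)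

def G2 (a b : ℝ) (u : ℝ → ℝ → ℝ) (r y : ℝ) : ℝ :=
  r ^ (-1 - a) * Real.sin (2*y) ^ (-1 - b) *
    (DR (Dbeta u) r y - 2 * b * Real.cos (2*y) * DR u r y
      - a * Dbeta u r y + 2 * a * b * Real.cos (2*y) * u r y)

lemma hasDeriv_G {K : Set (ℝ × ℝ)} {u : ℝ → ℝ → ℝ} (h : Good 2 K u) (a b r : ℝ) {y : ℝ}
    (hy : y ∈ Set.Ioo (0:ℝ) (Real.pi/2)) :
    HasDerivAt (fun y => r ^ (-a) * Real.sin (2*y) ^ (-b) * u r y) (G1 a b u r y) y := by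
  have hs := sin_pos_of hy
  have hu := hasDerivAt_snd (h.diff (n := 1)) r y
  have hsin : HasDerivAt (fun y => Real.sin (2*y)) (Real.cos (2*y) * 2) y := by
    have := ((hasDerivAt_id y).const_mul 2).sin
    simpa using this
  have hp := hsin.rpow_const (p := -b) (Or.inl hs.ne')
  have := ((hp.const_mul (r ^ (-a))).mul hu)
  refine this.congr_deriv ?_
  unfold G1
  rw [Dbeta_eq (h.diff (n := 1))]
  have e1 : Real.sin (2*y) ^ (-b) = Real.sin (2*y) ^ (-1 - b) * Real.sin (2*y) := by
    rw [← Real.rpow_add_one hs.ne']; congr 1; ring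
  have e2 : Real.sin (2*y) ^ (-b - 1) = Real.sin (2*y) ^ (-1 - b) := by congr 1; ring
  rw [e1, e2]; ring

lemma hasDeriv_G1 {K : Set (ℝ × ℝ)} (hK : IsClosed K) {u : ℝ → ℝ → ℝ} (h : Good 2 K u)
    (a b y : ℝ) {r : ℝ} (hr : 0 < r) :
    HasDerivAt (fun r => G1 a b u r y) (G2 a b u r y) r := by
  have hu := hasDerivAt_fst (h.diff (n := 1)) r y
  have hD : Good 1 K (Dbeta u) := Good.Dbeta hK (n := 1) h
  have hu2 := hasDerivAt_fst (hD.diff (n := 0)) r y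
  have hp := (hasDerivAt_id r).rpow_const (p := -a) (Or.inl hr.ne')
  have := (hp.mul_const (Real.sin (2*y) ^ (-1 - b))).mul
    (hu2.sub (hu.const_mul (2 * b * Real.cos (2*y))))
  refine this.congr_deriv ?_
  unfold G2
  rw [DR_eq (h.diff (n := 1)), DR_eq (hD.diff (n := 0))]
  have e1 : r ^ (-a) = r ^ (-1 - a) * r := by
    rw [← Real.rpow_add_one hr.ne']; congr 1; ring
  have e2 : r ^ (-a - 1) = r ^ (-1 - a) := by congr 1; ring
  simp only [id, Pi.sub_apply]
  rw [e1, e2]; ring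

lemma Good.cr {n : ℕ} {K : Set (ℝ × ℝ)} {v : ℝ → ℝ → ℝ} (h : Good n K v) (y : ℝ) :
    Continuous (fun r => v r y) :=
  h.1.continuous.comp (by fun_prop : Continuous fun r : ℝ => (r, y))

lemma Good.cb {n : ℕ} {K : Set (ℝ × ℝ)} {v : ℝ → ℝ → ℝ} (h : Good n K v) (r : ℝ) :
    Continuous (fun y => v r y) :=
  h.1.continuous.comp (by fun_prop : Continuous fun y : ℝ => (r, y))

lemma G1_cont {K : Set (ℝ × ℝ)} (hK : IsClosed K) {u : ℝ → ℝ → ℝ} (h : Good 2 K u) (a b r : ℝ) :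
    ContinuousOn (fun y => G1 a b u r y) (Set.Ioo (0:ℝ) (Real.pi/2)) := by
  have hc0' := h.cb r
  have hc1' := (Good.Dbeta hK (n := 1) h).cb r
  unfold G1
  apply ContinuousOn.mul
  · apply ContinuousOn.mul continuousOn_const
    apply ContinuousOn.rpow_const (by fun_prop)
    intro y hy
    exact Or.inl (sin_pos_of hy).ne'
  · exact Continuous.continuousOn (by fun_prop)

lemma G2_cont {K : Set (ℝ × ℝ)} (hK : IsClosed K) {u : ℝ → ℝ → ℝ} (h : Good 2 K u) (a b y : ℝ) :
    ContinuousOn (fun r => G2 a b u r y) (Set.Ioi (0:ℝ)) := by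
  have g1 := Good.Dbeta hK (n := 1) h
  have c1 := h.cr y
  have c2 := g1.cr y
  have c3 := (Good.DR hK (n := 1) h).cr y
  have c4 := (Good.DR hK (n := 0) g1).cr y
  unfold G2
  apply ContinuousOn.mul
  · apply ContinuousOn.mul _ continuousOn_const
    apply ContinuousOn.rpow_const (by fun_prop)
    intro r hr
    exact Or.inl (ne_of_gt hr)
  · exact Continuous.continuousOn (by fun_prop)

lemma Good.meas {n : ℕ} {K : Set (ℝ × ℝ)} {v : ℝ → ℝ → ℝ} (h : Good n K v) :
    Measurable (fun p : ℝ × ℝ => v p.1 p.2) := h.1.continuous.measurable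

lemma G2_meas {K : Set (ℝ × ℝ)} (hK : IsClosed K) {u : ℝ → ℝ → ℝ} (h : Good 2 K u) (a b : ℝ) :
    Measurable (fun p : ℝ × ℝ => G2 a b u p.1 p.2) := by
  have g1 := Good.Dbeta hK (n := 1) h
  have c1 := h.meas
  have c2 := g1.meas
  have c3 := (Good.DR hK (n := 1) h).meas
  have c4 := (Good.DR hK (n := 0) g1).meas
  unfold G2
  fun_prop

lemma lower_bound {K : Set (ℝ × ℝ)} (hK : IsCompact K) (hKQ : K ⊆ Qdom) :
    ∃ c : ℝ, 0 < c ∧ ∀ p ∈ K, c < p.1 ∧ c < p.2 := by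
  rcases K.eq_empty_or_nonempty with rfl | hne
  · exact ⟨1, one_pos, by simp⟩
  obtain ⟨p, hp, hmin⟩ := hK.exists_isMinOn hne (f := fun p : ℝ × ℝ => min p.1 p.2) (by fun_prop)
  have hpos : 0 < min p.1 p.2 := lt_min (hKQ hp).1 (hKQ hp).2.1
  refine ⟨min p.1 p.2 / 2, by linarith, fun q hq => ?_⟩
  have : min p.1 p.2 ≤ min q.1 q.2 := hmin hq
  have h1 := min_le_left q.1 q.2
  have h2 := min_le_right q.1 q.2
  constructor <;> linarith

lemma enorm_interval_le {F : ℝ → ℝ} {c d : ℝ} {S : Set ℝ} (hcd : c ≤ d) (hS : Set.Ioc c d ⊆ S) :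
    ‖∫ x in c..d, F x‖ₑ ≤ ∫⁻ x in S, ‖F x‖ₑ := by
  rw [intervalIntegral.integral_of_le hcd]
  exact (enorm_integral_le_lintegral_enorm _).trans (lintegral_mono_set hS)

lemma sup_le_lint {K : Set (ℝ × ℝ)} (hK : IsCompact K) (hKQ : K ⊆ Qdom) {u : ℝ → ℝ → ℝ}
    (h : Good 2 K u) (a b : ℝ) {R β : ℝ} (hp : (R, β) ∈ K) :
    ‖R ^ (-a) * Real.sin (2*β) ^ (-b) * u R β‖ₑ
      ≤ ∫⁻ p, ‖G2 a b u p.1 p.2‖ₑ ∂(μR.prod μB) := by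
  obtain ⟨c, hc, hcK⟩ := lower_bound hK hKQ
  have hR : c < R := (hcK _ hp).1
  have hβ : c < β := (hcK _ hp).2
  have hβ2 : β < Real.pi/2 := (hKQ hp).2.2
  have hz1 : ∀ y, (c, y) ∉ K := fun y hy => lt_irrefl _ (hcK _ hy).1
  have hz2 : ∀ r, (r, c) ∉ K := fun r hr => lt_irrefl _ (hcK _ hr).2
  have s1 : ∀ y ∈ Set.uIcc c β, y ∈ Set.Ioo (0:ℝ) (Real.pi/2) := by
    intro y hy
    rw [Set.uIcc_of_le hβ.le] at hy
    exact ⟨by linarith [hy.1], by linarith [hy.2]⟩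
  have s2 : ∀ r ∈ Set.uIcc c R, r ∈ Set.Ioi (0:ℝ) := by
    intro r hr
    rw [Set.uIcc_of_le hR.le] at hr
    exact lt_of_lt_of_le hc hr.1
  have f1 : R ^ (-a) * Real.sin (2*β) ^ (-b) * u R β = ∫ y in c..β, G1 a b u R y := by
    rw [intervalIntegral.integral_eq_sub_of_hasDerivAt
      (fun y hy => hasDeriv_G h a b R (s1 y hy))
      (((G1_cont hK.isClosed h a b R).mono s1).intervalIntegrable)]
    simp [h.2 R c (hz2 R)]
  have f2 : ∀ y, G1 a b u R y = ∫ r in c..R, G2 a b u r y := by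
    intro y
    rw [intervalIntegral.integral_eq_sub_of_hasDerivAt
      (fun r hr => hasDeriv_G1 hK.isClosed h a b y (s2 r hr))
      (((G2_cont hK.isClosed h a b y).mono s2).intervalIntegrable)]
    have : G1 a b u c y = 0 := by
      simp [G1, h.2 c y (hz1 y), (Good.Dbeta hK.isClosed (n := 1) h).2 c y (hz1 y)]
    rw [this, sub_zero]
  rw [lintegral_prod_symm _ (G2_meas hK.isClosed h a b).enorm.aemeasurable, f1]
  refine (enorm_interval_le (S := Set.Ioo (0:ℝ) (Real.pi/2)) hβ.le ?_).trans ?_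
  · intro y hy; exact ⟨by linarith [hy.1], by linarith [hy.2]⟩
  · apply lintegral_mono
    intro y
    simp only
    rw [f2 y]
    exact enorm_interval_le hR.le fun r hr => lt_trans hc hr.1

lemma CS {K : Set (ℝ × ℝ)} (hK : IsCompact K) (hKQ : K ⊆ Qdom) {v : ℝ → ℝ → ℝ}
    (h : Good 0 K v) {α a b : ℝ} (hα : 0 < α) (hα1 : α ≤ 1/1000) (ha : 0 ≤ a) (ha1 : a ≤ 1)
    (hb1 : b ≤ α/40) :
    ∫⁻ p, ‖Wt α a b p.1 p.2‖ₑ * ‖v p.1 p.2 * Real.sqrt (phi2 α p.1 p.2)‖ₑ ∂(μR.prod μB)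
      ≤ ENNReal.ofReal (C0 * α ^ (-(1/2 : ℝ)) * N2 α v) := by
  have m1 := measurable_Wt α a b
  have m2 := h.meas
  have m3 := measurable_phi2 α
  have := ENNReal.lintegral_mul_le_Lp_mul_Lq (μR.prod μB) Real.HolderConjugate.two_two
    (f := fun p => ‖Wt α a b p.1 p.2‖ₑ)
    (g := fun p => ‖v p.1 p.2 * Real.sqrt (phi2 α p.1 p.2)‖ₑ)
    (by fun_prop) (by fun_prop)
  rw [N2_eq hK hKQ h] at this
  refine this.trans ?_
  have hC : 0 ≤ C0 := Real.sqrt_nonneg _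
  rw [ENNReal.ofReal_mul (by positivity)]
  gcongr
  exact lint_Wt hα hα1 ha ha1 hb1

lemma core {K : Set (ℝ × ℝ)} (hK : IsCompact K) (hKQ : K ⊆ Qdom) {u : ℝ → ℝ → ℝ}
    (h : Good 2 K u) {α a b : ℝ} (hα : 0 < α) (hα1 : α ≤ 1/1000) (ha : 0 ≤ a) (ha1 : a ≤ 1)
    (hb : 0 ≤ b) (hb1 : b ≤ α/40) {R β : ℝ} (hR : 0 < R) (hβ : β ∈ Set.Ioo (0:ℝ) (Real.pi/2)) :
    R ^ (-a) * Real.sin (2*β) ^ (-b) * |u R β| ≤ C0 * α ^ (-(1/2 : ℝ)) *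
      (N2 α (DR (Dbeta u)) + 2 * b * N2 α (DR u) + a * N2 α (Dbeta u) + 2 * a * b * N2 α u) := by
  have hC : 0 ≤ C0 := Real.sqrt_nonneg _
  have n1 := N2_nonneg α (DR (Dbeta u))
  have n2 := N2_nonneg α (DR u)
  have n3 := N2_nonneg α (Dbeta u)
  have n4 := N2_nonneg α u
  have hA : 0 ≤ C0 * α ^ (-(1/2 : ℝ)) := by positivity
  by_cases hp : (R, β) ∈ K
  swap
  · rw [h.2 R β hp, abs_zero, mul_zero]; positivity
  have hs := sin_pos_of hβ
  have key := sup_le_lint hK hKQ h a b hp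
  have g3 := Good.Dbeta hK.isClosed (n := 1) h
  have g2 := Good.DR hK.isClosed (n := 1) h
  have g1 := Good.DR hK.isClosed (n := 0) g3
  have m0 := measurable_Wt α a b
  have m5 := measurable_phi2 α
  have m1 := g1.meas
  have m2 := g2.meas
  have m3 := g3.meas
  have m4 := h.meas
  have b1 := CS hK hKQ g1 hα hα1 ha ha1 hb1
  have b2 := CS hK hKQ (g2.mono (m := 0) (by norm_num)) hα hα1 ha ha1 hb1
  have b3 := CS hK hKQ (g3.mono (m := 0) (by norm_num)) hα hα1 ha ha1 hb1
  have b4 := CS hK hKQ (h.mono (m := 0) (by norm_num)) hα hα1 ha ha1 hb1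
  have hle : ∫⁻ p, ‖G2 a b u p.1 p.2‖ₑ ∂(μR.prod μB) ≤
      ∫⁻ p, (‖Wt α a b p.1 p.2‖ₑ * ‖DR (Dbeta u) p.1 p.2 * Real.sqrt (phi2 α p.1 p.2)‖ₑ
        + ENNReal.ofReal (2*b) *
          (‖Wt α a b p.1 p.2‖ₑ * ‖DR u p.1 p.2 * Real.sqrt (phi2 α p.1 p.2)‖ₑ)
        + ENNReal.ofReal a *
          (‖Wt α a b p.1 p.2‖ₑ * ‖Dbeta u p.1 p.2 * Real.sqrt (phi2 α p.1 p.2)‖ₑ)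
        + ENNReal.ofReal (2*a*b) *
          (‖Wt α a b p.1 p.2‖ₑ * ‖u p.1 p.2 * Real.sqrt (phi2 α p.1 p.2)‖ₑ)) ∂(μR.prod μB) := by
    rw [prod_eq]
    apply setLIntegral_mono' (measurableSet_Ioi.prod measurableSet_Ioo)
    rintro ⟨r, y⟩ ⟨hr, hy⟩
    have hr' : (0:ℝ) < r := hr
    have hphi := Real.sqrt_pos.2 (phi2_pos α hr' hy)
    have hsy := sin_pos_of hy
    simp only [← ofReal_norm, Real.norm_eq_abs]
    simp only [← ENNReal.ofReal_mul (abs_nonneg _)]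
    rw [← ENNReal.ofReal_mul (by positivity), ← ENNReal.ofReal_mul (by positivity),
      ← ENNReal.ofReal_mul (by positivity), ← ENNReal.ofReal_add (by positivity) (by positivity),
      ← ENNReal.ofReal_add (by positivity) (by positivity),
      ← ENNReal.ofReal_add (by positivity) (by positivity)]
    apply ENNReal.ofReal_le_ofReal
    have e : ∀ t : ℝ, |Wt α a b r y| * |t * Real.sqrt (phi2 α r y)|
        = r ^ (-1 - a) * Real.sin (2*y) ^ (-1 - b) * |t| := by
      intro t
      unfold Wt
      rw [abs_mul t, abs_of_pos hphi, abs_of_pos (by positivity)]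
      field_simp
    rw [e, e, e, e]
    unfold G2
    rw [abs_mul, abs_of_pos (a := r ^ (-1 - a) * Real.sin (2*y) ^ (-1 - b)) (by positivity)]
    have hcos := Real.abs_cos_le_one (2*y)
    have i2 : |2 * b * Real.cos (2*y) * DR u r y| ≤ 2 * b * |DR u r y| := by
      rw [abs_mul, abs_mul, abs_of_nonneg (by positivity : 0 ≤ 2 * b)]
      have : 2 * b * |Real.cos (2*y)| ≤ 2 * b := mul_le_of_le_one_right (by positivity) hcos
      exact mul_le_mul_of_nonneg_right this (abs_nonneg _)
    have i4 : |2 * a * b * Real.cos (2*y) * u r y| ≤ 2 * a * b * |u r y| := by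
      rw [abs_mul, abs_mul, abs_of_nonneg (by positivity : 0 ≤ 2 * a * b)]
      have : 2 * a * b * |Real.cos (2*y)| ≤ 2 * a * b := mul_le_of_le_one_right (by positivity) hcos
      exact mul_le_mul_of_nonneg_right this (abs_nonneg _)
    have i3 : |a * Dbeta u r y| = a * |Dbeta u r y| := by rw [abs_mul, abs_of_nonneg ha]
    have tri : |DR (Dbeta u) r y - 2 * b * Real.cos (2*y) * DR u r y
        - a * Dbeta u r y + 2 * a * b * Real.cos (2*y) * u r y|
        ≤ |DR (Dbeta u) r y| + 2 * b * |DR u r y| + a * |Dbeta u r y| + 2 * a * b * |u r y| := by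
      refine (abs_add_le _ _).trans ?_
      refine add_le_add ((abs_sub _ _).trans (add_le_add ((abs_sub _ _).trans ?_) i3.le)) i4
      linarith
    have hw : 0 ≤ r ^ (-1 - a) * Real.sin (2*y) ^ (-1 - b) := by positivity
    calc _ ≤ _ := mul_le_mul_of_nonneg_left tri hw
      _ = _ := by ring
  rw [lintegral_add_left (by fun_prop), lintegral_add_left (by fun_prop),
    lintegral_add_left (by fun_prop), lintegral_const_mul _ (by fun_prop),
    lintegral_const_mul _ (by fun_prop), lintegral_const_mul _ (by fun_prop)] at hle
  have fin := key.trans (hle.trans (add_le_add (add_le_add (add_le_add b1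
    (mul_le_mul_right b2 _)) (mul_le_mul_right b3 _)) (mul_le_mul_right b4 _)))
  rw [← ENNReal.ofReal_mul (by positivity), ← ENNReal.ofReal_mul (by positivity),
      ← ENNReal.ofReal_mul (by positivity), ← ENNReal.ofReal_add (by positivity) (by positivity),
      ← ENNReal.ofReal_add (by positivity) (by positivity),
      ← ENNReal.ofReal_add (by positivity) (by positivity), ← ofReal_norm,
      ENNReal.ofReal_le_ofReal_iff (by positivity), Real.norm_eq_abs, abs_mul,
      abs_of_pos (a := R ^ (-a) * Real.sin (2*β) ^ (-b)) (by positivity)] at fin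
  calc _ ≤ _ := fin
    _ = _ := by ring

lemma supDom_le {f : ℝ → ℝ → ℝ} {B : ℝ} (hB : 0 ≤ B)
    (h : ∀ R β, 0 < R → β ∈ Set.Ioo (0:ℝ) (Real.pi/2) → |f R β| ≤ B) : supDom f ≤ B :=
  Real.iSup_le (fun R => Real.iSup_le (fun β => h R.1 β.1 R.2 β.2) hB) hB

lemma N2_le_Hnorm (α : ℝ) (m i j : ℕ) (hij : i + j + 1 ≤ m) (f : ℝ → ℝ → ℝ) :
    N2 α (DR^[i] (Dbeta^[j+1] f)) ≤ Hnorm m phi1 (phi2 α) f := by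
  unfold Hnorm
  have h1 : 0 ≤ ∑ k ∈ Finset.range (m+1),
      norm2 (fun R β => DR^[k] f R β * Real.sqrt (phi1 R β)) :=
    Finset.sum_nonneg fun k _ => Real.sqrt_nonneg _
  have h2 := Finset.single_le_sum (s := (Finset.range (m+1) ×ˢ Finset.range (m+1)).filter
      (fun p => p.1 + p.2 + 1 ≤ m))
      (f := fun p => norm2 (fun R β => DR^[p.1] (Dbeta^[p.2+1] f) R β * Real.sqrt (phi2 α R β)))
      (fun p _ => Real.sqrt_nonneg _) (a := (i, j)) (by simp; omega)
  have h3 : N2 α (DR^[i] (Dbeta^[j+1] f)) = norm2 (fun R β => DR^[i] (Dbeta^[j+1] f) R β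
    * Real.sqrt (phi2 α R β)) := rfl
  simp only at h2
  linarith

/-- embeddings `‖f‖_∞ ≲ α^{-1/2}‖f‖_{H²}` and `‖f‖_{C¹} ≲ α^{-1/2}‖f‖_{H³}`. -/
theorem Linfty_and_C1_embeddings :
    ∃ C : ℝ, ∀ α : ℝ, 0 < α → α ≤ 1/1000 →
      ∀ f : ℝ → ℝ → ℝ, ContDiff ℝ 3 (Function.uncurry f) → suppIn f →
        supDom f ≤ C * α ^ (-(1/2 : ℝ)) * Hnorm 2 phi1 (phi2 α) f ∧
        C1norm α f ≤ C * α ^ (-(1/2 : ℝ)) * Hnorm 3 phi1 (phi2 α) f := by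
  refine ⟨9 * C0, fun α hα hα1 f hf hsupp => ?_⟩
  obtain ⟨K, hK, hKQ, hf0⟩ := hsupp
  have g : Good 3 K f := ⟨hf, hf0⟩
  have gR : Good 2 K (DR f) := Good.DR hK.isClosed g
  have gB : Good 2 K (Dbeta f) := Good.Dbeta hK.isClosed g
  have g2 : Good 2 K f := g.mono (by norm_num)
  have hC : 0 ≤ C0 := Real.sqrt_nonneg _
  have hA : 0 ≤ C0 * α ^ (-(1/2 : ℝ)) := by positivity
  set A := C0 * α ^ (-(1/2 : ℝ)) with hAdef
  -- terms
  have t2 : N2 α (DR (Dbeta f)) ≤ Hnorm 2 phi1 (phi2 α) f := N2_le_Hnorm α 2 1 0 (by norm_num) f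
  have t3 : N2 α (DR (Dbeta f)) ≤ Hnorm 3 phi1 (phi2 α) f := N2_le_Hnorm α 3 1 0 (by norm_num) f
  have t4 : N2 α (DR (DR (Dbeta f))) ≤ Hnorm 3 phi1 (phi2 α) f :=
    N2_le_Hnorm α 3 2 0 (by norm_num) f
  have t5 : N2 α (DR (Dbeta (Dbeta f))) ≤ Hnorm 3 phi1 (phi2 α) f :=
    N2_le_Hnorm α 3 1 1 (by norm_num) f
  have t6 : N2 α (Dbeta (Dbeta f)) ≤ Hnorm 3 phi1 (phi2 α) f :=
    N2_le_Hnorm α 3 0 1 (by norm_num) f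
  have t7 : N2 α (Dbeta f) ≤ Hnorm 3 phi1 (phi2 α) f :=
    N2_le_Hnorm α 3 0 0 (by norm_num) f
  have hH2 : 0 ≤ Hnorm 2 phi1 (phi2 α) f := (N2_nonneg _ _).trans t2
  have hH3 : 0 ≤ Hnorm 3 phi1 (phi2 α) f := (N2_nonneg _ _).trans t3
  have p0 : ∀ R β, 0 < R → β ∈ Set.Ioo (0:ℝ) (Real.pi/2) → |f R β| ≤ A * N2 α (DR (Dbeta f)) := by
    intro R β hR hβ
    have := core hK hKQ g2 hα hα1 (a := 0) (b := 0) le_rfl zero_le_one le_rfl (by positivity) hR hβ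
    simp only [neg_zero, Real.rpow_zero, mul_zero, zero_mul, add_zero, one_mul] at this
    exact this
  constructor
  · have : supDom f ≤ A * Hnorm 2 phi1 (phi2 α) f :=
      supDom_le (by positivity) fun R β hR hβ =>
        (p0 R β hR hβ).trans (mul_le_mul_of_nonneg_left t2 hA)
    nlinarith [mul_nonneg hA hH2]
  · have q1 : supDom f ≤ A * Hnorm 3 phi1 (phi2 α) f :=
      supDom_le (by positivity) fun R β hR hβ =>
        (p0 R β hR hβ).trans (mul_le_mul_of_nonneg_left t3 hA)
    have q2 : supDom (fun R β => (1+R)/R * DR f R β) ≤ A * (3 * Hnorm 3 phi1 (phi2 α) f) := by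
      refine supDom_le (by positivity) fun R β hR hβ => ?_
      have k1 := core hK hKQ gR hα hα1 (a := 0) (b := 0) le_rfl zero_le_one le_rfl
        (by positivity) hR hβ
      have k2 := core hK hKQ gR hα hα1 (a := 1) (b := 0) zero_le_one le_rfl le_rfl
        (by positivity) hR hβ
      rw [g2.comm] at k1 k2
      simp only [neg_zero, Real.rpow_zero, mul_zero, zero_mul, add_zero, one_mul, mul_one,
        Real.rpow_neg_one] at k1 k2
      have e : |(1+R)/R * DR f R β| = |DR f R β| + R⁻¹ * |DR f R β| := by
        rw [abs_mul, abs_of_pos (by positivity)]; field_simp; ring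
      rw [e]
      have := mul_le_mul_of_nonneg_left t4 hA
      have := mul_le_mul_of_nonneg_left t3 hA
      linarith
    have q3 : supDom (fun R β =>
      (1 + (R * Real.sin (2*β) ^ α) ^ (-(1/40 : ℝ))) * Dbeta f R β)
        ≤ A * (5 * Hnorm 3 phi1 (phi2 α) f) := by
      refine supDom_le (by positivity) fun R β hR hβ => ?_
      have hs := sin_pos_of hβ
      have k1 := core hK hKQ gB hα hα1 (a := 0) (b := 0) le_rfl zero_le_one le_rfl
        (by positivity) hR hβ
      have k2 := core hK hKQ gB hα hα1 (a := 1/40) (b := α/40) (by norm_num) (by norm_num)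
        (by positivity) le_rfl hR hβ
      simp only [neg_zero, Real.rpow_zero, mul_zero, zero_mul, add_zero, one_mul] at k1
      have e : |(1 + (R * Real.sin (2*β) ^ α) ^ (-(1/40 : ℝ))) * Dbeta f R β|
          = |Dbeta f R β| + R ^ (-(1/40:ℝ)) * Real.sin (2*β) ^ (-(α/40)) * |Dbeta f R β| := by
        rw [abs_mul, abs_of_pos (by positivity), Real.mul_rpow hR.le (by positivity),
          ← Real.rpow_mul hs.le, show α * -(1/40 : ℝ) = -(α/40) by ring]
        ring
      rw [e]
      have n1 := N2_nonneg α (DR (Dbeta f))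
      have n2 := N2_nonneg α (Dbeta (Dbeta f))
      have n3 := N2_nonneg α (Dbeta f)
      have s : N2 α (DR (Dbeta (Dbeta f))) + 2 * (α/40) * N2 α (DR (Dbeta f))
          + 1/40 * N2 α (Dbeta (Dbeta f)) + 2 * (1/40) * (α/40) * N2 α (Dbeta f)
          ≤ 4 * Hnorm 3 phi1 (phi2 α) f := by
        have : 2 * (α/40) * N2 α (DR (Dbeta f)) ≤ 1 * N2 α (DR (Dbeta f)) := by
          gcongr; linarith
        have : 2 * (1/40) * (α/40) * N2 α (Dbeta f) ≤ 1 * N2 α (Dbeta f) := by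
          gcongr; linarith
        linarith
      have := mul_le_mul_of_nonneg_left s hA
      have := mul_le_mul_of_nonneg_left t5 hA
      linarith
    have e : 9 * C0 * α ^ (-(1/2 : ℝ)) = 9 * A := by rw [hAdef]; ring
    unfold C1norm
    rw [e]
    linarith

end Paper
end
end
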